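/- arXiv:2308.09587 — 3 statements merged into one kernel-verified Lean document; each statement's English description precedes it below -/
import Mathlib

section
/- Let H = K[x]/(x^n) and write d = rn + k with 0 ≤ k < n. Then the variety Rep(H,d) of d×d nilpotent matrices N with N^n = 0 is irreducible, and the orbit of the module N_d := (K[x]/(x^n))^r ⊕ K[x]/(x^k) under conjugation by GL_d(K) is open and dense in Rep(H,d). -/
noncomputable section

open Matrix

variable (K : Type*) [Field K]

/-- The Zariski topology on d×d matrices over K: generated by the basic open sets
D(p) = {N | p(N) ≠ 0} for polynomials p in the matrix entries; its closed sets are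
exactly the zero loci of sets of polynomials. -/
def zariskiMat (d : ℕ) : TopologicalSpace (Matrix (Fin d) (Fin d) K) :=
  TopologicalSpace.generateFrom
    {U | ∃ p : MvPolynomial (Fin d × Fin d) K,
      U = {N | MvPolynomial.eval (fun q => N q.1 q.2) p ≠ 0}}

/-- The nilpotent Jordan block of size n (the x-action on K[x]/(xⁿ)). -/
def jordanBlock (n : ℕ) : Matrix (Fin n) (Fin n) K :=
  Matrix.of fun i j => if (i : ℕ) = (j : ℕ) + 1 then (1 : K) else 0

/-- The matrix of the H-module N_d = (K[x]/(xⁿ))^r ⊕ K[x]/(x^k) (for d = r·n + k):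
r Jordan blocks of size n and one of size k, reindexed to Fin d. -/
def Nmod (d n r k : ℕ) (hd : d = r * n + k) : Matrix (Fin d) (Fin d) K :=
  Matrix.reindex
    ((finProdFinEquiv.sumCongr (Equiv.refl (Fin k))).trans
      (finSumFinEquiv.trans (finCongr hd.symm)))
    ((finProdFinEquiv.sumCongr (Equiv.refl (Fin k))).trans
      (finSumFinEquiv.trans (finCongr hd.symm)))
    (Matrix.fromBlocks
      (Matrix.of fun (p : Fin r × Fin n) (q : Fin r × Fin n) =>
        if p.1 = q.1 then jordanBlock K n p.2 q.2 else 0)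
      0 0 (jordanBlock K k))

/-!
If `f` satisfies `fⁿ = 0`, then a dimension count produces a flag `V = F₀ ⊇ F₁ ⊇ …` with
`f Fₘ ⊆ Fₘ₊₁` whose dimensions depend only on `d = dim V` and `n`: `dim Fₘ` is the number of
`i < d` with `m ≤ i % n`. In an adapted basis, `f` strictly raises the level `i ↦ i % n` of basis
vectors. So the matrices `N` with `Nⁿ = 0` are exactly those of the form `g * X * adj g` with `X`
raising levels (the adjugate replaces `g⁻¹`, to stay polynomial in `g`), and `Rep(H,d)` is
irreducible as a polynomial image of an affine space.

A matrix `N` with `Nⁿ = 0` lies in the orbit of `N_d` as soon as `r` chains of length `n` and one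
of length `k` form a basis: modulo the span `F` of the long chains the space has dimension `k`, so
the generator `w` of the short chain has `Nᵏ w ∈ F`, and subtracting an element of `F` from it
achieves `Nᵏ w = 0`. Being a basis is the nonvanishing of a determinant that is polynomial in `N`.
-/

section Flags

open Module

variable {D V : Type*} [DivisionRing D] [AddCommGroup V] [Module D V] [FiniteDimensional D V]

theorem finrank_map_add_finrank_inf_ker (f : V →ₗ[D] V) (W : Submodule D V) :
    finrank D (W.map f) + finrank D ↥(W ⊓ LinearMap.ker f) = finrank D W := by
  have h := LinearMap.finrank_range_add_finrank_ker (f.domRestrict W)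
  rwa [LinearMap.range_domRestrict, LinearMap.ker_domRestrict, ← Submodule.finrank_map_subtype_eq,
    Submodule.map_comap_subtype] at h

theorem exists_between_finrank_eq {A B : Submodule D V} (hAB : A ≤ B) {m : ℕ}
    (hA : finrank D A ≤ m) (hB : m ≤ finrank D B) :
    ∃ W, A ≤ W ∧ W ≤ B ∧ finrank D W = m := by
  obtain ⟨C, hdisj, rfl⟩ := IsModularLattice.exists_disjoint_and_sup_eq hAB
  have hC : m - finrank D A ≤ finrank D C := by
    have := Submodule.finrank_add_le_finrank_add_finrank A C
    omega
  obtain ⟨s, hs, hli⟩ := exists_finset_linearIndependent_of_le_finrank hC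
  let E := (Submodule.span D (s : Set C)).map C.subtype
  have hE : finrank D E = m - finrank D A := by
    rw [Submodule.finrank_map_subtype_eq, finrank_span_finset_eq_card hli, hs]
  have hEC : E ≤ C := Submodule.map_subtype_le C _
  refine ⟨A ⊔ E, le_sup_left, sup_le_sup_left hEC A, ?_⟩
  have := Submodule.finrank_sup_add_finrank_inf_eq A E
  rw [(hdisj.mono_right hEC).eq_bot, finrank_bot] at this
  omega

theorem exists_sup_span_range_eq {A B : Submodule D V} (hAB : A ≤ B) (T : Type*) [Fintype T]
    (h : finrank D B = finrank D A + Fintype.card T) :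
    ∃ u : T → V, A ⊔ Submodule.span D (Set.range u) = B := by
  obtain ⟨C, hdisj, rfl⟩ := IsModularLattice.exists_disjoint_and_sup_eq hAB
  have hC : finrank D C = Fintype.card T := by
    have := Submodule.finrank_sup_add_finrank_inf_eq A C
    rw [hdisj.eq_bot, finrank_bot] at this
    omega
  let c : Basis T D C := (finBasisOfFinrankEq D C hC).reindex (Fintype.equivFin T).symm
  refine ⟨C.subtype ∘ c, ?_⟩
  rw [Set.range_comp, Submodule.span_image, c.span_eq, Submodule.map_subtype_top]

variable (f : End D V) {W : Submodule D V}

theorem finrank_le_mul_finrank_inf_ker_add (hW : W.map f ≤ W) (m : ℕ) :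
    finrank D W ≤ m * finrank D ↥(W ⊓ LinearMap.ker f) + finrank D (W.map (f ^ m)) := by
  induction m generalizing W with
  | zero => rw [pow_zero, End.one_eq_id, Submodule.map_id]; omega
  | succ m ih =>
    have hmono := Submodule.finrank_mono (R := D) (inf_le_inf_right (LinearMap.ker f) hW)
    have hstep := ih (Submodule.map_mono hW)
    rw [← Submodule.map_comp, ← End.mul_eq_comp, ← pow_succ] at hstep
    have hadd := finrank_map_add_finrank_inf_ker f W
    have := Nat.mul_le_mul_left m hmono
    rw [add_one_mul]
    omega

theorem mul_finrank_map_pow_le (hW : W.map f ≤ W) (m : ℕ) (hf : W.map (f ^ (m + 1)) = ⊥) :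
    (m + 1) * finrank D (W.map (f ^ m)) ≤ finrank D W := by
  induction m generalizing W with
  | zero => rw [pow_zero, End.one_eq_id, Submodule.map_id]; omega
  | succ m ih =>
    have map_map_pow : ∀ l, (W.map f).map (f ^ l) = W.map (f ^ (l + 1)) := fun l => by
      rw [← Submodule.map_comp, ← End.mul_eq_comp, ← pow_succ]
    have hstep := ih (Submodule.map_mono hW) (by rw [map_map_pow, hf])
    have hker : W.map (f ^ (m + 1)) ≤ W ⊓ LinearMap.ker f := by
      refine le_inf (Submodule.map_le_iff_le_comap.2
        (Submodule.le_comap_pow_of_le_comap W (Submodule.map_le_iff_le_comap.1 hW) _)) ?_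
      rwa [LinearMap.le_ker_iff_map, ← Submodule.map_comp, ← End.mul_eq_comp, ← pow_succ']
    rw [map_map_pow] at hstep
    have := finrank_map_add_finrank_inf_ker f W
    have := Submodule.finrank_mono (R := D) hker
    rw [add_one_mul]
    omega

theorem exists_flag_step (hW : W.map f ≤ W) {n r k : ℕ} (hk : k ≤ n + 1)
    (hf : W.map (f ^ (n + 1)) = ⊥) (hr : finrank D W = r * (n + 1) + k) :
    ∃ W', W.map f ≤ W' ∧ W' ≤ W ∧ W'.map (f ^ n) = ⊥ ∧ finrank D W' = r * n + (k - 1) := by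
  have hker := finrank_le_mul_finrank_inf_ker_add f hW (n + 1)
  have hpow := mul_finrank_map_pow_le f hW n hf
  have hker_add := finrank_map_add_finrank_inf_ker f W
  have hpow_add := finrank_map_add_finrank_inf_ker (f ^ n) W
  rw [hf, finrank_bot, add_zero] at hker
  have hle : W.map f ≤ W ⊓ LinearMap.ker (f ^ n) := by
    refine le_inf hW ?_
    rwa [LinearMap.le_ker_iff_map, ← Submodule.map_comp, ← End.mul_eq_comp, ← pow_succ]
  have hlower : finrank D (W.map f) ≤ r * n + (k - 1) := by
    rcases k.eq_zero_or_pos with rfl | hk₀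
    · have : r ≤ finrank D ↥(W ⊓ LinearMap.ker f) := by nlinarith
      grind
    · have : r < finrank D ↥(W ⊓ LinearMap.ker f) := by nlinarith
      grind
  have hupper : r * n + (k - 1) ≤ finrank D ↥(W ⊓ LinearMap.ker (f ^ n)) := by
    have : finrank D (W.map (f ^ n)) ≤ r + 1 := by nlinarith
    rcases hk.lt_or_eq with hlt | rfl
    · have : finrank D (W.map (f ^ n)) ≤ r := by nlinarith
      grind
    · grind
  obtain ⟨W', h₁, h₂, h₃⟩ := exists_between_finrank_eq hle hlower hupper
  exact ⟨W', h₁, h₂.trans inf_le_left,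
    LinearMap.le_ker_iff_map.1 (h₂.trans inf_le_right), h₃⟩

-- `r * (n - m) + (k - m)` is the dimension of `xᵐ • ((K[x]/(xⁿ))^r ⊕ K[x]/(xᵏ))`.
theorem exists_flag_finrank_eq (hW : W.map f ≤ W) {n r k : ℕ} (hk : k ≤ n) (hf : W.map (f ^ n) = ⊥)
    (hr : finrank D W = r * n + k) :
    ∃ F : ℕ → Submodule D V, F 0 = W ∧ Antitone F ∧ (∀ m, (F m).map f ≤ F (m + 1)) ∧
      ∀ m, finrank D (F m) = r * (n - m) + (k - m) := by
  induction n generalizing W k with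
  | zero =>
    refine ⟨fun _ => W, rfl, antitone_const, fun _ => hW, fun m => ?_⟩
    obtain rfl : k = 0 := by omega
    simp [hr]
  | succ n ih =>
    obtain ⟨W', hfW, hW'W, hfW', hr'⟩ := exists_flag_step f hW hk hf hr
    obtain ⟨F, hF₀, hanti, hF, hdim⟩ :=
      ih ((Submodule.map_mono hW'W).trans hfW) (by omega) hfW' hr'
    refine ⟨fun | 0 => W | m + 1 => F m, rfl, antitone_nat_of_succ_le ?_, ?_, ?_⟩
    · rintro (_ | m)
      exacts [hF₀.trans_le hW'W, hanti m.le_succ]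
    · rintro (_ | m)
      exacts [hfW.trans_eq hF₀.symm, hF m]
    · rintro (_ | m)
      · exact hr
      · simp only [hdim, Nat.add_sub_add_right, Nat.sub_sub, Nat.add_comm 1]

theorem card_le_eq_card_succ_le_add_card_eq {ι : Type*} [Fintype ι] (lev : ι → ℕ) (m : ℕ) :
    Fintype.card {i // m ≤ lev i} =
      Fintype.card {i // m + 1 ≤ lev i} + Fintype.card {i // lev i = m} := by
  rw [← Fintype.card_subtype_or_disjoint]
  · exact Fintype.card_congr (Equiv.subtypeEquivRight fun i => by omega)
  · exact Pi.disjoint_iff.2 fun i => Prop.disjoint_iff.2 (by omega)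

theorem exists_span_image_eq {ι : Type*} [Fintype ι] (lev : ι → ℕ) {F : ℕ → Submodule D V}
    (hF : Antitone F) (hdim : ∀ m, finrank D (F m) = Fintype.card {i // m ≤ lev i}) :
    ∃ v : ι → V, ∀ m, Submodule.span D (v '' {i | m ≤ lev i}) = F m := by
  choose u hu using fun m => exists_sup_span_range_eq (hF m.le_succ) {i // lev i = m} <| by
    rw [hdim, hdim, card_le_eq_card_succ_le_add_card_eq]
  let v : ι → V := fun i => u (lev i) ⟨i, rfl⟩
  have hv : ∀ m, v '' {i | lev i = m} = Set.range (u m) := by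
    refine fun m => Set.Subset.antisymm ?_ ?_
    · rintro _ ⟨i, rfl, rfl⟩
      exact ⟨⟨i, rfl⟩, rfl⟩
    · rintro _ ⟨⟨i, rfl⟩, rfl⟩
      exact ⟨i, rfl, rfl⟩
  obtain ⟨M, hM⟩ : ∃ M, ∀ i, lev i < M :=
    ⟨Finset.univ.sup lev + 1, fun i => Nat.lt_succ_of_le (Finset.le_sup (Finset.mem_univ i))⟩
  suffices ∀ l m, M ≤ m + l → Submodule.span D (v '' {i | m ≤ lev i}) = F m from
    ⟨v, fun m => this M m (Nat.le_add_left M m)⟩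
  intro l
  induction l with
  | zero =>
    intro m hm
    have hempty : {i | m ≤ lev i} = ∅ := Set.eq_empty_of_forall_notMem fun i hi =>
      ((hM i).trans_le hm).not_ge hi
    rw [hempty, Set.image_empty, Submodule.span_empty, eq_comm,
      ← Submodule.finrank_eq_zero (R := D), hdim, Fintype.card_eq_zero_iff]
    exact Set.isEmpty_coe_sort.2 hempty
  | succ l ih =>
    intro m hm
    have hunion : {i | m ≤ lev i} = {i | m + 1 ≤ lev i} ∪ {i | lev i = m} := by
      ext i
      simp only [Set.mem_ofPred_eq, Set.mem_union]
      omega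
    rw [hunion, Set.image_union, Submodule.span_union, ih (m + 1) (by omega), hv, hu]

theorem exists_basis_span_image_eq {ι : Type*} [Fintype ι] (lev : ι → ℕ) {F : ℕ → Submodule D V}
    (hF : Antitone F) (hF₀ : F 0 = ⊤)
    (hdim : ∀ m, finrank D (F m) = Fintype.card {i // m ≤ lev i}) :
    ∃ b : Basis ι D V, ∀ m, Submodule.span D (b '' {i | m ≤ lev i}) = F m := by
  obtain ⟨v, hv⟩ := exists_span_image_eq lev hF hdim
  have hspan : Submodule.span D (Set.range v) = ⊤ := by
    simpa [hF₀] using hv 0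
  have hcard : Fintype.card ι = finrank D V := by
    rw [← finrank_top, ← hF₀, hdim]
    simp
  refine ⟨basisOfTopLeSpanOfCardEqFinrank v hspan.ge hcard, fun m => ?_⟩
  rw [coe_basisOfTopLeSpanOfCardEqFinrank, hv]

theorem count_le_mod (m : ℕ) {n k : ℕ} (hk : k ≤ n) (r : ℕ) :
    Nat.count (fun i => m ≤ i % n) (r * n + k) = r * (n - m) + (k - m) := by
  have hcount_lt : ∀ l ≤ n, Nat.count (fun i => m ≤ i % n) l = l - m := by
    intro l hl
    induction l with
    | zero => simp
    | succ l ih =>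
      rw [Nat.count_succ, ih (by omega), Nat.mod_eq_of_lt (by omega)]
      split_ifs <;> omega
  induction r with
  | zero => simpa using hcount_lt k hk
  | succ r ih =>
    rw [add_one_mul, add_right_comm, add_comm, Nat.count_add]
    simp only [Nat.add_mod_left]
    rw [ih, hcount_lt n le_rfl]
    ring

theorem exists_basis_repr_apply_eq_zero {n d : ℕ} (hn : n ≠ 0) (hf : f ^ n = 0)
    (hd : finrank D V = d) :
    ∃ b : Basis (Fin d) D V, ∀ i j : Fin d, (i : ℕ) % n ≤ j % n → b.repr (f (b j)) i = 0 := by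
  have hmod := Nat.mod_lt d (Nat.pos_of_ne_zero hn)
  obtain ⟨F, hF₀, hanti, hF, hdim⟩ := exists_flag_finrank_eq f (W := ⊤) le_top hmod.le
    (by rw [hf, Submodule.map_zero]) (by rw [finrank_top, hd, Nat.div_add_mod'])
  have hcard : ∀ m, finrank D (F m) = Fintype.card {i : Fin d // m ≤ (i : ℕ) % n} := by
    intro m
    rw [hdim, ← count_le_mod m hmod.le, Nat.div_add_mod', Nat.count_eq_card_filter_range,
      Fintype.card_subtype, Finset.card_filter, Finset.card_filter, Finset.sum_range]
  obtain ⟨b, hb⟩ := exists_basis_span_image_eq (fun i : Fin d => (i : ℕ) % n) hanti hF₀ hcard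
  refine ⟨b, fun i j hij => ?_⟩
  have hbj : b j ∈ F ((j : ℕ) % n) := by
    rw [← hb]
    exact Submodule.subset_span ⟨j, le_refl ((j : ℕ) % n), rfl⟩
  have hfbj : f (b j) ∈ F ((j : ℕ) % n + 1) := hF _ ⟨b j, hbj, rfl⟩
  rw [← hb, b.mem_span_image] at hfbj
  exact Finsupp.notMem_support_iff.1 fun hi => (hfbj hi).not_gt (Nat.lt_succ_of_le hij)

end Flags

section ChainSpan

open Module

variable {D V J : Type*} [DivisionRing D] [AddCommGroup V] [Module D V] (f : End D V)

/-- The span of the first `n` terms of the orbits `v j, f (v j), f² (v j), …`. When these are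
linearly independent and `fⁿ = 0`, it is the free `D[x]/(xⁿ)`-module on the `v j`. -/
def chainSpan (n : ℕ) (v : J → V) : Submodule D V :=
  Submodule.span D (Set.range fun p : J × Fin n => (f ^ (p.2 : ℕ)) (v p.1))

variable {f} {n : ℕ} {v : J → V}

theorem pow_apply_mem_chainSpan (hf : f ^ n = 0) (m : ℕ) (j : J) :
    (f ^ m) (v j) ∈ chainSpan f n v := by
  by_cases hm : m < n
  · exact Submodule.subset_span ⟨(j, ⟨m, hm⟩), rfl⟩
  · rw [pow_eq_zero_of_le (not_lt.1 hm) hf, LinearMap.zero_apply]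
    exact Submodule.zero_mem _

theorem map_chainSpan_le (hf : f ^ n = 0) : (chainSpan f n v).map f ≤ chainSpan f n v := by
  rw [chainSpan, Submodule.map_span_le]
  rintro _ ⟨p, rfl⟩
  rw [← End.mul_apply, ← pow_succ']
  exact pow_apply_mem_chainSpan hf _ _

theorem chainSpan_le_sup_of_sub_mem {I : Type*} (hf : f ^ n = 0) (k : ℕ) {w w' : I → V}
    (hw : ∀ i, w i - w' i ∈ chainSpan f n v) :
    chainSpan f k w ≤ chainSpan f n v ⊔ chainSpan f k w' := by
  rw [chainSpan, Submodule.span_le]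
  rintro _ ⟨⟨i, m⟩, rfl⟩
  have hdiff : (f ^ (m : ℕ)) (w i - w' i) ∈ chainSpan f n v :=
    Submodule.le_comap_pow_of_le_comap _ (Submodule.map_le_iff_le_comap.1 (map_chainSpan_le hf)) m
      (hw i)
  change (f ^ (m : ℕ)) (w i) ∈ _
  rw [← sub_add_cancel (w i) (w' i), map_add]
  exact Submodule.add_mem_sup hdiff (Submodule.subset_span ⟨(i, m), rfl⟩)

variable [FiniteDimensional D V]

theorem range_pow_le_of_finrank_eq_add {W : Submodule D V} (hf : IsNilpotent f)
    (hW : W.map f ≤ W) {k : ℕ} (hk : finrank D V = finrank D W + k) :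
    LinearMap.range (f ^ k) ≤ W := by
  obtain ⟨n, hn⟩ := hf
  have hinv : W ≤ W.comap f := Submodule.map_le_iff_le_comap.1 hW
  have hquot : finrank D (V ⧸ W) = k := by
    have := Submodule.finrank_quotient_add_finrank W
    omega
  have hnil : W.mapQ W f hinv ^ n = 0 := by
    rw [← Submodule.mapQ_pow]
    simp [hn]
  have hzero : W.mapQ W f hinv ^ k = 0 := by
    have := End.ker_pow_le_ker_pow_finrank (W.mapQ W f hinv) n
    rwa [hnil, hquot, LinearMap.ker_zero, top_le_iff, LinearMap.ker_eq_top] at this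
  rintro _ ⟨x, rfl⟩
  rw [← Submodule.mapQ_pow] at hzero
  simpa using LinearMap.congr_fun hzero (W.mkQ x)

theorem card_mul_le_finrank_map_pow_chainSpan [Fintype J]
    (hli : LinearIndependent D fun p : J × Fin n => (f ^ (p.2 : ℕ)) (v p.1)) (m : ℕ) :
    Fintype.card J * (n - m) ≤ finrank D ((chainSpan f n v).map (f ^ m)) := by
  let shift : J × Fin (n - m) → J × Fin n := fun p => (p.1, ⟨m + p.2, by omega⟩)
  have hshift : Function.Injective shift := fun p q h => by
    simpa [shift, Prod.ext_iff, Fin.ext_iff] using h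
  rw [← Fintype.card_fin (n - m), ← Fintype.card_prod, ← finrank_span_eq_card (hli.comp _ hshift)]
  refine Submodule.finrank_mono (Submodule.span_le.2 ?_)
  rintro _ ⟨⟨j, i⟩, rfl⟩
  refine ⟨(f ^ (i : ℕ)) (v j), Submodule.subset_span ⟨(j, ⟨i, by omega⟩), rfl⟩, ?_⟩
  rw [← End.mul_apply, ← pow_add]
  rfl

-- Over `D[x]/(xⁿ)`, the elements of a free module killed by `xⁿ⁻ᵐ` are the multiples of `xᵐ`.
theorem chainSpan_inf_ker_pow_le_map_pow [Finite J] (hf : f ^ n = 0)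
    (hli : LinearIndependent D fun p : J × Fin n => (f ^ (p.2 : ℕ)) (v p.1)) {m : ℕ} (hm : m ≤ n) :
    chainSpan f n v ⊓ LinearMap.ker (f ^ (n - m)) ≤ (chainSpan f n v).map (f ^ m) := by
  have hle : (chainSpan f n v).map (f ^ m) ≤ chainSpan f n v ⊓ LinearMap.ker (f ^ (n - m)) := by
    refine le_inf (Submodule.map_le_iff_le_comap.2 (Submodule.le_comap_pow_of_le_comap _
      (Submodule.map_le_iff_le_comap.1 (map_chainSpan_le hf)) m)) ?_
    rw [LinearMap.le_ker_iff_map, ← Submodule.map_comp, ← End.mul_eq_comp, ← pow_add,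
      Nat.sub_add_cancel hm, hf, Submodule.map_zero]
  refine (Submodule.eq_of_le_of_finrank_le hle ?_).ge
  have := Fintype.ofFinite J
  have hdim : finrank D (chainSpan f n v) = Fintype.card J * n := by
    rw [chainSpan, finrank_span_eq_card hli, Fintype.card_prod, Fintype.card_fin]
  have hadd := finrank_map_add_finrank_inf_ker (f ^ (n - m)) (chainSpan f n v)
  have hrank := card_mul_le_finrank_map_pow_chainSpan hli m
  have hrank' := card_mul_le_finrank_map_pow_chainSpan hli (n - m)
  rw [Nat.sub_sub_self hm] at hrank'
  rw [Nat.mul_sub] at hrank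
  omega

theorem exists_pow_apply_eq_zero_and_sub_mem_chainSpan [Fintype J] (hf : f ^ n = 0)
    (hli : LinearIndependent D fun p : J × Fin n => (f ^ (p.2 : ℕ)) (v p.1))
    {k : ℕ} (hk : k ≤ n) (hdim : finrank D V = Fintype.card J * n + k) (w : V) :
    ∃ w', (f ^ k) w' = 0 ∧ w - w' ∈ chainSpan f n v := by
  have hrange : LinearMap.range (f ^ k) ≤ chainSpan f n v := by
    refine range_pow_le_of_finrank_eq_add ⟨n, hf⟩ (map_chainSpan_le hf) ?_
    rw [hdim, chainSpan, finrank_span_eq_card hli, Fintype.card_prod, Fintype.card_fin]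
  have hker : (f ^ k) w ∈ LinearMap.ker (f ^ (n - k)) := by
    rw [LinearMap.mem_ker, ← End.mul_apply, ← pow_add, Nat.sub_add_cancel hk, hf,
      LinearMap.zero_apply]
  obtain ⟨y, hy, hyw⟩ := chainSpan_inf_ker_pow_le_map_pow hf hli hk ⟨hrange ⟨w, rfl⟩, hker⟩
  exact ⟨w - y, by rw [map_sub, hyw, sub_self], by rwa [sub_sub_cancel]⟩

end ChainSpan

section LevelRaising

/-- The matrices sending each basis vector `e_j` into the span of the `e_i` whose level `lev i` is
strictly larger than `lev j`. -/
def RaisesLevel {ι R : Type*} [Zero R] (lev : ι → ℕ) (X : Matrix ι ι R) : Prop :=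
  ∀ i j, lev i ≤ lev j → X i j = 0

variable {ι R : Type*} [Fintype ι] [DecidableEq ι] {lev : ι → ℕ}

theorem RaisesLevel.pow_apply_eq_zero [Semiring R] {X : Matrix ι ι R} (hX : RaisesLevel lev X)
    (m : ℕ) {i j : ι} (h : lev i < lev j + m) : (X ^ m) i j = 0 := by
  induction m generalizing i with
  | zero =>
    rw [pow_zero, one_apply_ne]
    rintro rfl
    omega
  | succ m ih =>
    rw [pow_succ', mul_apply]
    refine Finset.sum_eq_zero fun l _ => ?_
    by_cases hl : lev l < lev j + m
    · rw [ih hl, mul_zero]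
    · rw [hX i l (by omega), zero_mul]

theorem RaisesLevel.pow_eq_zero [Semiring R] {X : Matrix ι ι R} (hX : RaisesLevel lev X) {n : ℕ}
    (hlev : ∀ i, lev i < n) : X ^ n = 0 := by
  ext i j
  exact hX.pow_apply_eq_zero n ((hlev i).trans_le (Nat.le_add_left n _))

theorem mul_mul_adjugate_pow_succ [CommRing R] (g X : Matrix ι ι R) (m : ℕ) :
    (g * X * g.adjugate) ^ (m + 1) = g.det ^ m • (g * X ^ (m + 1) * g.adjugate) := by
  induction m with
  | zero => simp
  | succ m ih =>
    calc (g * X * g.adjugate) ^ (m + 1 + 1)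
        = g.det ^ m • (g * X ^ (m + 1) * (g.adjugate * g) * X * g.adjugate) := by
          rw [pow_succ, ih, Matrix.smul_mul]
          simp only [Matrix.mul_assoc]
      _ = g.det ^ (m + 1) • (g * X ^ (m + 1 + 1) * g.adjugate) := by
          rw [adjugate_mul, Matrix.mul_smul, Matrix.mul_one, Matrix.smul_mul, Matrix.smul_mul,
            smul_smul, ← pow_succ, Matrix.mul_assoc g, ← pow_succ]

theorem RaisesLevel.mul_mul_adjugate_pow_eq_zero [CommRing R] {X : Matrix ι ι R}
    (hX : RaisesLevel lev X) {n : ℕ} (hn : n ≠ 0) (hlev : ∀ i, lev i < n) (g : Matrix ι ι R) :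
    (g * X * g.adjugate) ^ n = 0 := by
  obtain ⟨m, rfl⟩ := Nat.exists_eq_succ_of_ne_zero hn
  rw [mul_mul_adjugate_pow_succ, hX.pow_eq_zero hlev, Matrix.mul_zero, Matrix.zero_mul, smul_zero]

theorem exists_raisesLevel_eq_mul_mul_adjugate {F : Type*} [Field F] {d n : ℕ} (hn : n ≠ 0)
    {N : Matrix (Fin d) (Fin d) F} (hN : N ^ n = 0) :
    ∃ g X, RaisesLevel (fun i : Fin d => (i : ℕ) % n) X ∧ N = g * X * g.adjugate := by
  obtain ⟨b, hb⟩ := exists_basis_repr_apply_eq_zero N.toLin' hn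
    (by rw [← toLin'_pow, hN, map_zero]) (Module.finrank_fin_fun F)
  let g := (Pi.basisFun F (Fin d)).toMatrix b
  have hginv : b.toMatrix (Pi.basisFun F (Fin d)) = g.det⁻¹ • g.adjugate := by
    rw [← Ring.inverse_eq_inv', ← inv_def]
    exact (inv_eq_right_inv ((Pi.basisFun F (Fin d)).toMatrix_mul_toMatrix_flip b)).symm
  refine ⟨g, g.det⁻¹ • LinearMap.toMatrix b b N.toLin', fun i j hij => ?_, ?_⟩
  · rw [Matrix.smul_apply, LinearMap.toMatrix_apply, hb i j hij, smul_zero]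
  · rw [Matrix.mul_smul, Matrix.smul_mul, ← Matrix.mul_smul, ← hginv,
      basis_toMatrix_mul_linearMap_toMatrix_mul_basis_toMatrix, LinearMap.toMatrix_eq_toMatrix',
      LinearMap.toMatrix'_toLin']

end LevelRaising

section Irreducibility

variable {K} {d : ℕ}

theorem isTopologicalBasis_zariskiMat :
    letI := zariskiMat K d
    TopologicalSpace.IsTopologicalBasis
      {U : Set (Matrix (Fin d) (Fin d) K) | ∃ p : MvPolynomial (Fin d × Fin d) K,
        U = {N | MvPolynomial.eval (fun q => N q.1 q.2) p ≠ 0}} := by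
  let _ := zariskiMat K d
  refine ⟨?_, ?_, rfl⟩
  · rintro _ ⟨p, rfl⟩ _ ⟨q, rfl⟩ N hN
    exact ⟨_, ⟨p * q, rfl⟩, by simpa using hN, fun M hM => by simpa using hM⟩
  · exact Set.sUnion_eq_univ_iff.2 fun N => ⟨_, ⟨1, rfl⟩, by simp⟩

theorem isIrreducible_range_map_eval [Infinite K] {τ : Type*}
    (P : Matrix (Fin d) (Fin d) (MvPolynomial τ K)) :
    letI := zariskiMat K d
    IsIrreducible (Set.range fun x : τ → K => P.map (MvPolynomial.eval x)) := by
  let _ := zariskiMat K d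
  refine ⟨Set.range_nonempty _, ?_⟩
  rintro U V hU hV ⟨_, ⟨x, rfl⟩, hxU⟩ ⟨_, ⟨y, rfl⟩, hyV⟩
  obtain ⟨_, ⟨p, rfl⟩, hxp, hpU⟩ := isTopologicalBasis_zariskiMat.exists_subset_of_mem_open hxU hU
  obtain ⟨_, ⟨q, rfl⟩, hyq, hqV⟩ := isTopologicalBasis_zariskiMat.exists_subset_of_mem_open hyV hV
  let pull := MvPolynomial.bind₁ fun s : Fin d × Fin d => P s.1 s.2
  have eval_pull : ∀ z p, MvPolynomial.eval z (pull p) =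
      MvPolynomial.eval (fun s => P.map (MvPolynomial.eval z) s.1 s.2) p := fun z p =>
    MvPolynomial.eval₂Hom_bind₁ _ _ _ _
  have pull_ne_zero : ∀ z p,
      MvPolynomial.eval (fun s => P.map (MvPolynomial.eval z) s.1 s.2) p ≠ 0 → pull p ≠ 0 :=
    fun z p hz h => hz (by rw [← eval_pull, h, map_zero])
  obtain ⟨z, hz⟩ : ∃ z, MvPolynomial.eval z (pull p * pull q) ≠ 0 := by
    by_contra! h
    exact mul_ne_zero (pull_ne_zero x p hxp) (pull_ne_zero y q hyq)
      (MvPolynomial.funext fun z => by rw [h, map_zero])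
  rw [map_mul, eval_pull, eval_pull] at hz
  exact ⟨_, ⟨z, rfl⟩, hpU (left_ne_zero_of_mul hz), hqV (right_ne_zero_of_mul hz)⟩

/-- The polynomial family of all `g * X * adj g`, where `X` raises the level `i ↦ i % n`: its
parameters are the entries of `g` (`Sum.inl`) and of `X` (`Sum.inr`). -/
def genericNilpotent (K : Type*) [Field K] (d n : ℕ) :
    Matrix (Fin d) (Fin d) (MvPolynomial ((Fin d × Fin d) ⊕ (Fin d × Fin d)) K) :=
  let g : Matrix (Fin d) (Fin d) (MvPolynomial ((Fin d × Fin d) ⊕ (Fin d × Fin d)) K) :=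
    of fun i j => MvPolynomial.X (Sum.inl (i, j))
  g * (of fun i j : Fin d => if (j : ℕ) % n < i % n then MvPolynomial.X (Sum.inr (i, j)) else 0) *
    g.adjugate

theorem genericNilpotent_map_eval (n : ℕ) (x : (Fin d × Fin d) ⊕ (Fin d × Fin d) → K) :
    (genericNilpotent K d n).map (MvPolynomial.eval x) =
      (of fun i j => x (Sum.inl (i, j))) *
        (of fun i j : Fin d => if (j : ℕ) % n < i % n then x (Sum.inr (i, j)) else 0) *
        (of fun i j => x (Sum.inl (i, j))).adjugate := by
  rw [genericNilpotent, ← RingHom.mapMatrix_apply, map_mul, map_mul, RingHom.map_adjugate]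
  congr! 2 <;> ext <;> simp [apply_ite (MvPolynomial.eval x)]

theorem range_genericNilpotent_map_eval {n : ℕ} (hn : n ≠ 0) :
    (Set.range fun x => (genericNilpotent K d n).map (MvPolynomial.eval x)) = {N | N ^ n = 0} := by
  simp only [genericNilpotent_map_eval]
  refine Set.Subset.antisymm ?_ fun N hN => ?_
  · rintro _ ⟨x, rfl⟩
    refine RaisesLevel.mul_mul_adjugate_pow_eq_zero (lev := fun i : Fin d => (i : ℕ) % n)
      (fun i j hij => if_neg hij.not_gt) hn (fun i => Nat.mod_lt _ (Nat.pos_of_ne_zero hn)) _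
  · obtain ⟨g, X, hX, rfl⟩ := exists_raisesLevel_eq_mul_mul_adjugate hn hN
    refine ⟨Sum.elim (fun q => g q.1 q.2) fun q => X q.1 q.2, ?_⟩
    congr! 2
    ext i j
    exact ite_eq_left_iff.2 fun hij => (hX i j (not_lt.1 hij)).symm

theorem isIrreducible_setOf_pow_eq_zero [Infinite K] {n : ℕ} (hn : n ≠ 0) :
    letI := zariskiMat K d
    IsIrreducible {N : Matrix (Fin d) (Fin d) K | N ^ n = 0} := by
  rw [← range_genericNilpotent_map_eval hn]
  exact isIrreducible_range_map_eval _

end Irreducibility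

section JordanChains

variable {ι R C : Type*} [Fintype ι] [DecidableEq ι]

/-- The chains `u c, N * u c, …, N ^ (len c - 1) * u c`, as the columns of a matrix. -/
def chainMatrix [Semiring R] (len : C → ℕ) (N : Matrix ι ι R) (u : C → ι → R) :
    Matrix ι (Σ c, Fin (len c)) R :=
  of fun i s => (N ^ (s.2 : ℕ) *ᵥ u s.1) i

theorem chainMatrix_col [Semiring R] (len : C → ℕ) (N : Matrix ι ι R) (u : C → ι → R)
    (s : Σ c, Fin (len c)) : (chainMatrix len N u).col s = N ^ (s.2 : ℕ) *ᵥ u s.1 :=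
  rfl

theorem chainMatrix_map [Semiring R] {S : Type*} [Semiring S] (φ : R →+* S) (len : C → ℕ)
    (N : Matrix ι ι R) (u : C → ι → R) :
    (chainMatrix len N u).map φ = chainMatrix len (N.map φ) fun c => φ ∘ u c := by
  ext i s
  simp only [map_apply, chainMatrix, of_apply, RingHom.map_mulVec, ← RingHom.mapMatrix_apply,
    map_pow]

/-- The nilpotent matrix with one Jordan block of size `len c` for every `c`, i.e. the action of
`x` on `⨁ c, K[x]/(x ^ len c)`. -/
def jordanMatrix (K : Type*) [Field K] [DecidableEq C] (len : C → ℕ) :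
    Matrix (Σ c, Fin (len c)) (Σ c, Fin (len c)) K :=
  blockDiagonal' fun c => jordanBlock K (len c)

variable {K} [Fintype C] [DecidableEq C] {len : C → ℕ}

theorem jordanMatrix_mulVec_single (c : C) (a : Fin (len c)) :
    jordanMatrix K len *ᵥ Pi.single ⟨c, a⟩ 1 =
      if h : (a : ℕ) + 1 < len c then Pi.single ⟨c, ⟨a + 1, h⟩⟩ 1 else 0 := by
  rw [mulVec_single_one]
  ext ⟨c', b⟩
  rw [col_apply, jordanMatrix]
  rcases eq_or_ne c' c with rfl | hc
  · rw [blockDiagonal'_apply_eq, jordanBlock, of_apply]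
    split_ifs with hb h h
    · obtain rfl : b = ⟨a + 1, h⟩ := Fin.ext hb
      simp
    · omega
    · rw [Pi.single_eq_of_ne]
      rintro ⟨⟩
      exact hb rfl
    · rfl
  · rw [blockDiagonal'_apply_ne _ _ _ hc]
    split_ifs with h
    · rw [Pi.single_eq_of_ne]
      rintro ⟨⟩
      exact hc rfl
    · rfl

theorem jordanMatrix_pow_mulVec_single (m : ℕ) (c : C) (a : Fin (len c)) :
    jordanMatrix K len ^ m *ᵥ Pi.single ⟨c, a⟩ 1 =
      if h : (a : ℕ) + m < len c then Pi.single ⟨c, ⟨a + m, h⟩⟩ 1 else 0 := by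
  induction m with
  | zero => rw [pow_zero, one_mulVec, dif_pos (by simp)]; rfl
  | succ m ih =>
    rw [pow_succ', ← mulVec_mulVec, ih]
    split_ifs with h₁ h₂ h₂
    · rw [jordanMatrix_mulVec_single]
      exact dif_pos h₂
    · rw [jordanMatrix_mulVec_single]
      exact dif_neg h₂
    · omega
    · rw [mulVec_zero]

theorem jordanMatrix_pow_eq_zero {n : ℕ} (hlen : ∀ c, len c ≤ n) : jordanMatrix K len ^ n = 0 := by
  refine ext_of_mulVec_single fun ⟨c, a⟩ => ?_
  rw [jordanMatrix_pow_mulVec_single, zero_mulVec, dif_neg]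
  have := hlen c
  omega

theorem mul_chainMatrix_eq_chainMatrix_mul {N : Matrix ι ι K} {u : C → ι → K}
    (hu : ∀ c, N ^ len c *ᵥ u c = 0) :
    N * chainMatrix len N u = chainMatrix len N u * jordanMatrix K len := by
  refine ext_of_mulVec_single fun ⟨c, a⟩ => ?_
  rw [← mulVec_mulVec, ← mulVec_mulVec, jordanMatrix_mulVec_single, mulVec_single_one,
    chainMatrix_col, mulVec_mulVec, ← pow_succ']
  split_ifs with h
  · rw [mulVec_single_one, chainMatrix_col]
  · obtain ha : (a : ℕ) + 1 = len c := by omega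
    rw [ha, hu, mulVec_zero]

theorem pow_mulVec_col_of_mul_eq_mul {N : Matrix ι ι K} {G : Matrix ι (Σ c, Fin (len c)) K}
    (hG : N * G = G * jordanMatrix K len) (m : ℕ) (c : C) (a : Fin (len c)) :
    N ^ m *ᵥ G.col ⟨c, a⟩ = if h : (a : ℕ) + m < len c then G.col ⟨c, ⟨a + m, h⟩⟩ else 0 := by
  have hpow : N ^ m * G = G * jordanMatrix K len ^ m := by
    induction m with
    | zero => rw [pow_zero, pow_zero, Matrix.one_mul, Matrix.mul_one]
    | succ m ih =>
      rw [pow_succ, Matrix.mul_assoc, hG, ← Matrix.mul_assoc, ih, Matrix.mul_assoc, ← pow_succ]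
  rw [← mulVec_single_one, mulVec_mulVec, hpow, ← mulVec_mulVec, jordanMatrix_pow_mulVec_single]
  split_ifs
  · rw [mulVec_single_one]
  · rw [mulVec_zero]

theorem mul_eq_mul_jordanMatrix_iff {N : Matrix ι ι K} {G : Matrix ι (Σ c, Fin (len c)) K} :
    N * G = G * jordanMatrix K len ↔
      ∃ u, (∀ c, N ^ len c *ᵥ u c = 0) ∧ chainMatrix len N u = G := by
  refine ⟨fun hG => ?_, ?_⟩
  · refine ⟨fun c => if h : 0 < len c then G.col ⟨c, ⟨0, h⟩⟩ else 0, fun c => ?_, ?_⟩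
    · dsimp only
      split_ifs
      · rw [pow_mulVec_col_of_mul_eq_mul hG, dif_neg (by simp)]
      · rw [mulVec_zero]
    · refine ext_of_mulVec_single fun ⟨c, a⟩ => ?_
      rw [mulVec_single_one, mulVec_single_one, chainMatrix_col, dif_pos a.pos,
        pow_mulVec_col_of_mul_eq_mul hG, dif_pos (by simp)]
      simp
  · rintro ⟨u, hu, rfl⟩
    exact mul_chainMatrix_eq_chainMatrix_mul hu

theorem eq_mul_reindex_mul_inv_iff (e : (Σ c, Fin (len c)) ≃ ι) {N : Matrix ι ι K}
    (g : (Matrix ι ι K)ˣ) :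
    N = (g : Matrix ι ι K) * reindex e e (jordanMatrix K len) * (↑g⁻¹ : Matrix ι ι K) ↔
      N * (g : Matrix ι ι K).submatrix id e =
        (g : Matrix ι ι K).submatrix id e * jordanMatrix K len := by
  have hleft : N * (g : Matrix ι ι K).submatrix id e = (N * g).submatrix id e :=
    submatrix_mul_equiv N _ id (Equiv.refl ι) e
  have hright : (g : Matrix ι ι K).submatrix id e * jordanMatrix K len =
      ((g : Matrix ι ι K) * reindex e e (jordanMatrix K len)).submatrix id e := by
    rw [← submatrix_mul_equiv _ _ id e e, reindex_apply, submatrix_submatrix,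
      Equiv.symm_comp_self, submatrix_id_id]
  rw [Units.eq_mul_inv_iff_mul_eq, hleft, hright]
  exact ((reindex (Equiv.refl ι) e.symm).injective.eq_iff).symm

end JordanChains

section Orbit

variable {K} {ι C : Type*} [Fintype ι] [DecidableEq ι] {len : C → ℕ}

theorem exists_eq_mul_reindex_mul_inv_iff [Finite C] [DecidableEq C] (e : (Σ c, Fin (len c)) ≃ ι)
    {N : Matrix ι ι K} :
    (∃ g : (Matrix ι ι K)ˣ,
      N = (g : Matrix ι ι K) * reindex e e (jordanMatrix K len) * (↑g⁻¹ : Matrix ι ι K)) ↔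
    ∃ u, (∀ c, N ^ len c *ᵥ u c = 0) ∧ IsUnit ((chainMatrix len N u).submatrix id e.symm) := by
  have := Fintype.ofFinite C
  simp only [eq_mul_reindex_mul_inv_iff, mul_eq_mul_jordanMatrix_iff]
  constructor
  · rintro ⟨g, u, hu, hg⟩
    exact ⟨u, hu, g, by simp [hg]⟩
  · rintro ⟨u, hu, g, hg⟩
    exact ⟨g, u, hu, by simp [hg]⟩

theorem isOpen_setOf_isUnit_chainMatrix {d : ℕ} (e : (Σ c, Fin (len c)) ≃ Fin d)
    (u : C → Fin d → K) :
    letI := zariskiMat K d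
    IsOpen {N | IsUnit ((chainMatrix len N u).submatrix id e.symm)} := by
  refine TopologicalSpace.isOpen_generateFrom_of_mem
    ⟨((chainMatrix len (mvPolynomialX (Fin d) (Fin d) K) fun c => MvPolynomial.C ∘ u c).submatrix
      id e.symm).det, ?_⟩
  ext N
  have eval_C_comp : ∀ c,
      MvPolynomial.eval (fun q : Fin d × Fin d => N q.1 q.2) ∘ MvPolynomial.C ∘ u c = u c :=
    fun c => funext fun i => MvPolynomial.eval_C _
  rw [Set.mem_ofPred_eq, Set.mem_ofPred_eq, RingHom.map_det, RingHom.mapMatrix_apply,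
    ← submatrix_map, chainMatrix_map, ← RingHom.mapMatrix_apply, mvPolynomialX_mapMatrix_eval]
  simp only [eval_C_comp, isUnit_iff_isUnit_det, isUnit_iff_ne_zero]

theorem isUnit_iff_span_range_col_eq_top {R : Type*} [CommRing R] {A : Matrix ι ι R} :
    IsUnit A ↔ Submodule.span R (Set.range A.col) = ⊤ := by
  rw [← mulVec_surjective_iff_isUnit, ← range_mulVecLin, LinearMap.range_eq_top]
  rfl

theorem isUnit_submatrix_iff_span_range_col_eq_top {R σ : Type*} [CommRing R] (e : σ ≃ ι)
    {A : Matrix ι σ R} :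
    IsUnit (A.submatrix id e.symm) ↔ Submodule.span R (Set.range A.col) = ⊤ := by
  rw [isUnit_iff_span_range_col_eq_top]
  exact (congrArg (Submodule.span R · = ⊤) (e.symm.surjective.range_comp A.col)).to_iff

/-- The block sizes of `(K[x]/(xⁿ))^J ⊕ K[x]/(xᵏ)`. -/
def blockSize (J : Type*) (n k : ℕ) : J ⊕ Unit → ℕ :=
  Sum.elim (fun _ => n) fun _ => k

variable {J : Type*} {n k : ℕ}

theorem span_range_col_chainMatrix_blockSize (N : Matrix ι ι K) (u : J ⊕ Unit → ι → K) :
    Submodule.span K (Set.range (chainMatrix (blockSize J n k) N u).col) =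
      chainSpan N.toLin' n (u ∘ Sum.inl) ⊔ chainSpan N.toLin' k (u ∘ Sum.inr) := by
  rw [chainSpan, chainSpan, ← Submodule.span_union]
  simp only [← toLin'_pow]
  congr 1
  refine Set.Subset.antisymm ?_ (Set.union_subset ?_ ?_)
  · rintro _ ⟨⟨j | j, a⟩, rfl⟩
    exacts [Or.inl ⟨(j, a), rfl⟩, Or.inr ⟨(j, a), rfl⟩]
  · rintro _ ⟨⟨j, a⟩, rfl⟩
    exact ⟨⟨Sum.inl j, a⟩, rfl⟩
  · rintro _ ⟨⟨j, a⟩, rfl⟩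
    exact ⟨⟨Sum.inr j, a⟩, rfl⟩

theorem linearIndependent_of_isUnit_chainMatrix (e : (Σ c, Fin (blockSize J n k c)) ≃ ι)
    {N : Matrix ι ι K} {u : J ⊕ Unit → ι → K}
    (hu : IsUnit ((chainMatrix (blockSize J n k) N u).submatrix id e.symm)) :
    LinearIndependent K fun p : J × Fin n => (N.toLin' ^ (p.2 : ℕ)) ((u ∘ Sum.inl) p.1) := by
  let incl : J × Fin n → Σ c, Fin (blockSize J n k c) := fun p => ⟨Sum.inl p.1, p.2⟩
  have hincl : Function.Injective incl := by
    rintro ⟨j, a⟩ ⟨j', a'⟩ h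
    cases h
    rfl
  have hcol : (fun p : J × Fin n => (N.toLin' ^ (p.2 : ℕ)) ((u ∘ Sum.inl) p.1)) =
      ((chainMatrix (blockSize J n k) N u).submatrix id e.symm).col ∘ e ∘ incl := by
    ext1 p
    rw [← toLin'_pow]
    exact (congrArg (chainMatrix (blockSize J n k) N u).col (e.symm_apply_apply (incl p))).symm
  rw [hcol]
  exact (linearIndependent_cols_iff_isUnit.2 hu).comp _ (e.injective.comp hincl)

theorem card_sigma_blockSize [Fintype J] :
    Fintype.card (Σ c, Fin (blockSize J n k c)) = Fintype.card J * n + k := by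
  rw [Fintype.card_sigma, Fintype.sum_sum_type]
  simp only [Fintype.card_fin]
  simp [blockSize]

theorem exists_pow_mulVec_eq_zero_and_isUnit_chainMatrix [Finite J]
    (e : (Σ c, Fin (blockSize J n k c)) ≃ ι) (hk : k ≤ n) {N : Matrix ι ι K} (hN : N ^ n = 0)
    {u : J ⊕ Unit → ι → K}
    (hu : IsUnit ((chainMatrix (blockSize J n k) N u).submatrix id e.symm)) :
    ∃ u', (∀ c, N ^ blockSize J n k c *ᵥ u' c = 0) ∧
      IsUnit ((chainMatrix (blockSize J n k) N u').submatrix id e.symm) := by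
  have := Fintype.ofFinite J
  have hf : N.toLin' ^ n = 0 := by rw [← toLin'_pow, hN, map_zero]
  have hdim : Module.finrank K (ι → K) = Fintype.card J * n + k := by
    rw [Module.finrank_fintype_fun_eq_card, ← Fintype.card_congr e, card_sigma_blockSize]
  obtain ⟨w, hw, huw⟩ := exists_pow_apply_eq_zero_and_sub_mem_chainSpan hf
    (linearIndependent_of_isUnit_chainMatrix e hu) hk hdim (u (Sum.inr ()))
  refine ⟨Sum.elim (u ∘ Sum.inl) fun _ => w, ?_, ?_⟩
  · rintro (j | _)
    · exact (congrArg (· *ᵥ _) hN).trans (zero_mulVec _)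
    · rwa [← toLin'_pow, toLin'_apply] at hw
  · rw [isUnit_submatrix_iff_span_range_col_eq_top, span_range_col_chainMatrix_blockSize] at hu ⊢
    rw [eq_top_iff, ← hu]
    exact sup_le le_sup_left (chainSpan_le_sup_of_sub_mem hf k fun _ => huw)

theorem setOf_exists_eq_mul_reindex_mul_inv [Finite J] (e : (Σ c, Fin (blockSize J n k c)) ≃ ι)
    [DecidableEq J] (hk : k ≤ n) :
    {N | ∃ g : (Matrix ι ι K)ˣ, N = (g : Matrix ι ι K) *
        reindex e e (jordanMatrix K (blockSize J n k)) * (↑g⁻¹ : Matrix ι ι K)} =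
      (⋃ u, {N | IsUnit ((chainMatrix (blockSize J n k) N u).submatrix id e.symm)}) ∩
        {N | N ^ n = 0} := by
  have := Fintype.ofFinite J
  have hlen : ∀ c, blockSize J n k c ≤ n := by
    rintro (_ | _)
    exacts [le_rfl, hk]
  ext N
  refine ⟨fun h => ⟨?_, ?_⟩, fun ⟨h, hN⟩ => ?_⟩
  · obtain ⟨u, -, hu⟩ := (exists_eq_mul_reindex_mul_inv_iff e).1 h
    exact Set.mem_iUnion.2 ⟨u, hu⟩
  · obtain ⟨g, rfl⟩ := h
    change _ ^ n = 0
    rw [Units.conj_pow, ← coe_reindexAlgEquiv K K, ← map_pow, jordanMatrix_pow_eq_zero hlen,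
      map_zero, Matrix.mul_zero, Matrix.zero_mul]
  · obtain ⟨u, hu⟩ := Set.mem_iUnion.1 h
    exact (exists_eq_mul_reindex_mul_inv_iff e).2
      (exists_pow_mulVec_eq_zero_and_isUnit_chainMatrix e hk hN hu)

end Orbit

section Module

variable {d n r k : ℕ}

/-- The basis of `(K[x]/(xⁿ))^r ⊕ K[x]/(xᵏ)` as a disjoint union of Jordan chains, in the indexing
by which `Nmod` is written as a block matrix. -/
def sigmaBlockSizeEquiv : (Σ c, Fin (blockSize (Fin r) n k c)) ≃ (Fin r × Fin n) ⊕ Fin k :=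
  (Equiv.sumSigmaDistrib _).trans ((Equiv.sigmaEquivProd (Fin r) (Fin n)).sumCongr
    (Equiv.uniqueSigma fun _ : Unit => Fin k))

/-- The same basis, indexed by `Fin d` as in `Nmod`. -/
def blockEquiv (hd : d = r * n + k) : (Σ c, Fin (blockSize (Fin r) n k c)) ≃ Fin d :=
  sigmaBlockSizeEquiv.trans ((finProdFinEquiv.sumCongr (Equiv.refl (Fin k))).trans
    (finSumFinEquiv.trans (finCongr hd.symm)))

theorem reindex_jordanMatrix_blockSize :
    reindex sigmaBlockSizeEquiv sigmaBlockSizeEquiv (jordanMatrix K (blockSize (Fin r) n k)) =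
      fromBlocks (of fun p q : Fin r × Fin n => if p.1 = q.1 then jordanBlock K n p.2 q.2 else 0)
        0 0 (jordanBlock K k) := by
  let block := fun c => jordanBlock K (blockSize (Fin r) n k c)
  refine Matrix.ext ?_
  rintro (⟨j, a⟩ | a) (⟨j', a'⟩ | a')
  · rcases eq_or_ne j j' with rfl | hj
    · exact (blockDiagonal'_apply_eq block (Sum.inl j) a a').trans (if_pos rfl).symm
    · exact (blockDiagonal'_apply_ne block _ _ (Sum.inl_injective.ne hj)).trans (if_neg hj).symm
  · exact blockDiagonal'_apply_ne block (k := Sum.inl j) (k' := Sum.inr ()) a a' Sum.inl_ne_inr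
  · exact blockDiagonal'_apply_ne block (k := Sum.inr ()) (k' := Sum.inl j') a a' Sum.inr_ne_inl
  · exact blockDiagonal'_apply_eq block (Sum.inr ()) a a'

theorem Nmod_eq_reindex_jordanMatrix (hd : d = r * n + k) :
    Nmod K d n r k hd =
      reindex (blockEquiv hd) (blockEquiv hd) (jordanMatrix K (blockSize (Fin r) n k)) := by
  rw [Nmod, ← reindex_jordanMatrix_blockSize]
  rfl

end Module

theorem stmt_1_general [Infinite K] (n d r k : ℕ) (hd : d = r * n + k) (hk : k < n) :
    letI := zariskiMat K d
    IsIrreducible {N : Matrix (Fin d) (Fin d) K | N ^ n = 0} ∧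
    (∃ U : Set (Matrix (Fin d) (Fin d) K), IsOpen U ∧
      {M | ∃ g : (Matrix (Fin d) (Fin d) K)ˣ, M = (g : Matrix (Fin d) (Fin d) K) *
          Nmod K d n r k hd * (↑g⁻¹ : Matrix (Fin d) (Fin d) K)}
        = U ∩ {N | N ^ n = 0}) ∧
    {N : Matrix (Fin d) (Fin d) K | N ^ n = 0}
      ⊆ closure {M | ∃ g : (Matrix (Fin d) (Fin d) K)ˣ, M = (g : Matrix (Fin d) (Fin d) K) *
          Nmod K d n r k hd * (↑g⁻¹ : Matrix (Fin d) (Fin d) K)} := by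
  let _ := zariskiMat K d
  have hirr : IsIrreducible {N : Matrix (Fin d) (Fin d) K | N ^ n = 0} :=
    isIrreducible_setOf_pow_eq_zero (by omega)
  have hopen := isOpen_iUnion fun u => isOpen_setOf_isUnit_chainMatrix (K := K) (blockEquiv hd) u
  have horbit := setOf_exists_eq_mul_reindex_mul_inv (K := K) (blockEquiv hd) hk.le
  rw [← Nmod_eq_reindex_jordanMatrix K hd] at horbit
  refine ⟨hirr, ⟨_, hopen, horbit⟩, ?_⟩
  rw [horbit, Set.inter_comm]
  refine subset_closure_inter_of_isPreirreducible_of_isOpen hirr.isPreirreducible hopen ?_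
  rw [Set.inter_comm, ← horbit]
  exact ⟨_, 1, rfl⟩

/-- for H = K[x]/(xⁿ) and d = r·n + k with 0 ≤ k < n, the representation
variety Rep(H,d) = {N | Nⁿ = 0} is irreducible in the Zariski topology, and the
GL_d(K)-conjugation orbit of N_d is open in Rep(H,d) and dense in it. -/
theorem stmt_1 [IsAlgClosed K] [CharZero K]
    (n d r k : ℕ) (hn : 1 ≤ n) (hd : d = r * n + k) (hk : k < n) :
    letI := zariskiMat K d
    IsIrreducible {N : Matrix (Fin d) (Fin d) K | N ^ n = 0} ∧
    (∃ U : Set (Matrix (Fin d) (Fin d) K), IsOpen U ∧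
      {M | ∃ g : (Matrix (Fin d) (Fin d) K)ˣ, M = (g : Matrix (Fin d) (Fin d) K) * Nmod K d n r k hd * (↑g⁻¹ : Matrix (Fin d) (Fin d) K)}
        = U ∩ {N | N ^ n = 0}) ∧
    {N : Matrix (Fin d) (Fin d) K | N ^ n = 0}
      ⊆ closure {M | ∃ g : (Matrix (Fin d) (Fin d) K)ˣ,
          M = (g : Matrix (Fin d) (Fin d) K) * Nmod K d n r k hd * (↑g⁻¹ : Matrix (Fin d) (Fin d) K)} :=
  stmt_1_general K n d r k hd hk

end
end

section
/- Let H = KQ/(ε⁴) of type ℬ𝒞̃₁ and let V ∈ mod(H) be a brick (End_H(V) ≅ K) with dimension vector (v₁,v₂) where v₁ = dim V(1) and v₂ = dim V(2). Then the nilpotent endomorphism V(ε): V(1) → V(1) has maximal rank among operators with fourth power zero, i.e. writing v₁ = 4r+s with 0 ≤ s ≤ 3, dim_K End_{K[x]/(x⁴)}(V(1)) = 4r² + 2rs + s. -/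
noncomputable section

open Matrix

variable (K : Type*) [Field K]

/-!
Let `aᵢ` be the number of Jordan blocks of size greater than `i` of a nilpotent `E` on `V(1)`.
Restricting the operators that commute with `E` to the range of `E` peels off `a₀`, and shows that
`v₁ = ∑ aᵢ` while the commutant of `E` has dimension `d = ∑ aᵢ²`. With at most four summands,
Cauchy–Schwarz gives `v₁² ≤ 4 d`; moreover `d ≡ v₁` modulo `2`. In the other direction, the left
exact sequence of a brick gives `d + v₂² ≤ v₁ v₂ + 1`, hence `4 d ≤ v₁² + 4`. The two bounds leave
at most two consecutive values for `d`, and the parity selects one of them.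
-/

section Dimension

variable {K} {V W : Type*} [AddCommGroup V] [Module K V] [FiniteDimensional K V] [AddCommGroup W]
  [Module K W] [FiniteDimensional K W]

lemma finrank_le_finrank_add_finrank_inf_ker (f : V →ₗ[K] W) (S : Submodule K V) :
    Module.finrank K S ≤ Module.finrank K W + Module.finrank K ↥(S ⊓ LinearMap.ker f) := by
  have h_rank := f.finrank_range_add_finrank_ker
  have h_range := (LinearMap.range f).finrank_le
  have h_sup := (S ⊔ LinearMap.ker f).finrank_le
  have h_inf := Submodule.finrank_sup_add_finrank_inf_eq S (LinearMap.ker f)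
  lia

lemma finrank_submodule_prod (S : Submodule K V) (T : Submodule K W) :
    Module.finrank K (S.prod T) = Module.finrank K S + Module.finrank K T := by
  have h_inj : Function.Injective (S.subtype.prodMap T.subtype) :=
    S.injective_subtype.prodMap T.injective_subtype
  rw [← Module.finrank_prod, ← LinearMap.finrank_range_of_inj h_inj, LinearMap.range_prodMap,
    S.range_subtype, T.range_subtype]

end Dimension

section Commutant

lemma mem_centralizer_singleton {R A : Type*} [CommSemiring R] [Semiring A] [Algebra R A]
    {a x : A} : x ∈ Subalgebra.centralizer R {a} ↔ a * x = x * a := by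
  simp [Subalgebra.mem_centralizer_iff]

lemma toSubmodule_centralizer_singleton {R A : Type*} [CommRing R] [Ring A] [Algebra R A] (a : A) :
    Subalgebra.toSubmodule (Subalgebra.centralizer R {a}) =
      LinearMap.ker (LinearMap.mulLeft R a - LinearMap.mulRight R a) := by
  ext x
  simp [mem_centralizer_singleton, sub_eq_zero]

lemma map_centralizer_singleton {R A B : Type*} [CommSemiring R] [Semiring A] [Algebra R A]
    [Semiring B] [Algebra R B] (e : A ≃ₐ[R] B) (a : A) :
    (Subalgebra.centralizer R {a}).map (e : A →ₐ[R] B) = Subalgebra.centralizer R {e a} := by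
  ext y
  obtain ⟨x, rfl⟩ := e.surjective y
  simp [mem_centralizer_singleton, ← map_mul]

lemma finrank_centralizer_singleton_algEquiv {R A B : Type*} [CommSemiring R] [Semiring A]
    [Algebra R A] [Semiring B] [Algebra R B] (e : A ≃ₐ[R] B) (a : A) :
    Module.finrank R (Subalgebra.centralizer R {e a}) =
      Module.finrank R (Subalgebra.centralizer R {a}) := by
  rw [← map_centralizer_singleton]
  exact (e.subalgebraMap _).toLinearEquiv.finrank_eq.symm

end Commutant

section RestrictToRange

variable {R V : Type*} [CommRing R] [AddCommGroup V] [Module R V]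

/-- The endomorphism that `E` induces on its own range. -/
def restrictToRange (E : Module.End R V) : Module.End R (LinearMap.range E) :=
  E.restrict fun x _ => LinearMap.mem_range_self E x

lemma map_subtype_range_restrictToRange_pow (E : Module.End R V) (i : ℕ) :
    (LinearMap.range (restrictToRange E ^ i)).map (LinearMap.range E).subtype =
      LinearMap.range (E ^ (i + 1)) := by
  have h : (LinearMap.range E).subtype ∘ₗ (restrictToRange E ^ i) =
      (E ^ i) ∘ₗ (LinearMap.range E).subtype :=
    (Module.End.commute_pow_left_of_commute (g := restrictToRange E) (g₂ := E) rfl i).symm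
  rw [← LinearMap.range_comp, h, LinearMap.range_comp, Submodule.range_subtype,
    ← LinearMap.range_comp, pow_succ]
  rfl

lemma map_subtype_ker_restrictToRange (E : Module.End R V) :
    (LinearMap.ker (restrictToRange E)).map (LinearMap.range E).subtype =
      LinearMap.range E ⊓ LinearMap.ker E := by
  rw [restrictToRange, LinearMap.ker_restrict, Submodule.map_comap_subtype]

lemma restrictToRange_pow_eq_zero {E : Module.End R V} {k : ℕ} (hE : E ^ (k + 1) = 0) :
    restrictToRange E ^ k = 0 := by
  rw [← LinearMap.range_eq_bot]
  apply Submodule.map_injective_of_injective (LinearMap.range E).injective_subtype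
  rw [map_subtype_range_restrictToRange_pow, hE, LinearMap.range_zero, Submodule.map_bot]

/-- Restriction to the range of `E` of the endomorphisms commuting with `E`; they preserve that
range, and their restrictions commute with the restriction of `E`. -/
def centralizerRestrict (E : Module.End R V) :
    Subalgebra.centralizer R {E} →ₗ[R] Subalgebra.centralizer R {restrictToRange E} where
  toFun P :=
    have hP := mem_centralizer_singleton.1 P.2
    ⟨P.1.restrict (p := LinearMap.range E) (q := LinearMap.range E) (by
      rintro _ ⟨y, rfl⟩
      exact ⟨P.1 y, LinearMap.congr_fun hP y⟩),
    mem_centralizer_singleton.2 (LinearMap.restrict_commute hP _ _)⟩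
  map_add' _ _ := rfl
  map_smul' _ _ := rfl

lemma mem_ker_centralizerRestrict {E : Module.End R V} {P : Subalgebra.centralizer R {E}} :
    P ∈ LinearMap.ker (centralizerRestrict E) ↔ P.1 * E = 0 := by
  constructor
  · intro hP
    ext y
    exact congrArg Subtype.val
      (LinearMap.congr_fun (congrArg Subtype.val (LinearMap.mem_ker.1 hP)) (E.rangeRestrict y))
  · intro hP
    apply Subtype.ext
    ext ⟨_, y, rfl⟩
    exact LinearMap.congr_fun hP y

/-- The endomorphisms commuting with `E` and vanishing on its range are the maps that factor
through the cokernel of `E` and take values in its kernel. -/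
def homQuotRangeKerEquiv (E : Module.End R V) :
    ((V ⧸ LinearMap.range E) →ₗ[R] LinearMap.ker E) ≃ₗ[R]
      LinearMap.ker (centralizerRestrict E) where
  toFun f :=
    have hl : E * ((LinearMap.ker E).subtype ∘ₗ f ∘ₗ (LinearMap.range E).mkQ) = 0 := by
      ext x
      exact (f (Submodule.Quotient.mk x)).2
    have hr : ((LinearMap.ker E).subtype ∘ₗ f ∘ₗ (LinearMap.range E).mkQ) * E = 0 := by
      ext x
      simp [(Submodule.Quotient.mk_eq_zero _).2 (LinearMap.mem_range_self E x)]
    ⟨⟨_, mem_centralizer_singleton.2 (hl.trans hr.symm)⟩, mem_ker_centralizerRestrict.2 hr⟩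
  invFun P :=
    have hr := mem_ker_centralizerRestrict.1 P.2
    have hl := (mem_centralizer_singleton.1 P.1.2).trans hr
    (LinearMap.range E).liftQ (P.1.1.codRestrict (LinearMap.ker E) (LinearMap.congr_fun hl)) (by
      rintro _ ⟨x, rfl⟩
      exact Subtype.ext (LinearMap.congr_fun hr x))
  map_add' _ _ := rfl
  map_smul' _ _ := rfl
  left_inv f := by
    ext x
    rfl
  right_inv _ := rfl

end RestrictToRange

section NilpotentCommutant

variable {K} {V : Type*} [AddCommGroup V] [Module K V]

lemma centralizerRestrict_surjective (E : Module.End K V) :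
    Function.Surjective (centralizerRestrict E) := by
  rintro ⟨φ, hφ⟩
  rw [mem_centralizer_singleton] at hφ
  obtain ⟨σ, hσ⟩ := LinearMap.exists_rightInverse_of_surjective E.rangeRestrict
    (LinearMap.range_rangeRestrict E)
  have hEσ (y : LinearMap.range E) : E (σ y) = y :=
    congrArg Subtype.val (LinearMap.congr_fun hσ y)
  -- `P₀` solves `E P₀ = φ E`; on the range of `E` it differs from `φ` by a map into the kernel.
  let P₀ : Module.End K V := σ ∘ₗ φ ∘ₗ E.rangeRestrict
  have hP₀ (x : V) : E (P₀ x) = φ (E.rangeRestrict x) := hEσ _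
  let δ : LinearMap.range E →ₗ[K] LinearMap.ker E :=
    ((LinearMap.range E).subtype ∘ₗ φ - P₀ ∘ₗ (LinearMap.range E).subtype).codRestrict _ (by
      intro y
      have hy : E (φ y) = φ (E.rangeRestrict y) :=
        congrArg Subtype.val (LinearMap.congr_fun hφ y)
      simp [hP₀, hy])
  obtain ⟨Δ, hΔ⟩ := LinearMap.exists_extend δ
  let P : Module.End K V := P₀ + (LinearMap.ker E).subtype ∘ₗ Δ
  have hP_range (y : LinearMap.range E) : P y = φ y := by
    have hy : (Δ y : V) = φ y - P₀ y := congrArg Subtype.val (LinearMap.congr_fun hΔ y)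
    simp [P, hy]
  have hP : E * P = P * E := by
    ext x
    calc E (P x) = φ (E.rangeRestrict x) := by simp [P, hP₀]
      _ = P (E x) := (hP_range (E.rangeRestrict x)).symm
  refine ⟨⟨P, mem_centralizer_singleton.2 hP⟩, Subtype.ext ?_⟩
  ext y
  exact hP_range y

/-- The number of Jordan blocks of `E` with eigenvalue `0` and size greater than `i`: each such
block contributes one dimension to `ker E ⊓ range (E ^ i)`. -/
def jordanBlockCount (E : Module.End K V) (i : ℕ) : ℕ :=
  Module.finrank K ↥(LinearMap.ker E ⊓ LinearMap.range (E ^ i))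

lemma jordanBlockCount_zero (E : Module.End K V) :
    jordanBlockCount E 0 = Module.finrank K (LinearMap.ker E) := by
  rw [jordanBlockCount, pow_zero, Module.End.one_eq_id, LinearMap.range_id, inf_top_eq]

lemma jordanBlockCount_restrictToRange (E : Module.End K V) (i : ℕ) :
    jordanBlockCount (restrictToRange E) i = jordanBlockCount E (i + 1) := by
  have h_le : LinearMap.range (E ^ (i + 1)) ≤ LinearMap.range E := by
    rw [pow_succ']
    exact LinearMap.range_comp_le_range _ _
  rw [jordanBlockCount, ← Submodule.finrank_map_subtype_eq,
    Submodule.map_inf _ (LinearMap.range E).injective_subtype, map_subtype_ker_restrictToRange,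
    map_subtype_range_restrictToRange_pow, inf_right_comm, inf_eq_right.2 h_le, inf_comm,
    jordanBlockCount]

variable [FiniteDimensional K V]

lemma finrank_quotient_range_eq_finrank_ker (E : Module.End K V) :
    Module.finrank K (V ⧸ LinearMap.range E) = Module.finrank K (LinearMap.ker E) := by
  have h₁ := E.finrank_range_add_finrank_ker
  have h₂ := (LinearMap.range E).finrank_quotient_add_finrank
  lia

lemma finrank_centralizer_eq_sq_add (E : Module.End K V) :
    Module.finrank K (Subalgebra.centralizer K {E}) = Module.finrank K (LinearMap.ker E) ^ 2 +
      Module.finrank K (Subalgebra.centralizer K {restrictToRange E}) := by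
  have h := LinearMap.finrank_range_add_finrank_ker (K := K) (V := Subalgebra.centralizer K {E})
    (V₂ := Subalgebra.centralizer K {restrictToRange E}) (centralizerRestrict E)
  rw [LinearMap.range_eq_top.2 (centralizerRestrict_surjective E), finrank_top,
    ← (homQuotRangeKerEquiv E).finrank_eq, Module.finrank_linearMap,
    finrank_quotient_range_eq_finrank_ker, ← sq, add_comm] at h
  exact h.symm

theorem finrank_eq_sum_jordanBlockCount {E : Module.End K V} {k : ℕ} (hE : E ^ k = 0) :
    Module.finrank K V = ∑ i ∈ Finset.range k, jordanBlockCount E i := by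
  induction k generalizing V with
  | zero =>
    have : Subsingleton V := subsingleton_of_forall_eq 0 (LinearMap.congr_fun hE)
    simp [Module.finrank_zero_of_subsingleton]
  | succ k ih =>
    rw [Finset.sum_range_succ', jordanBlockCount_zero, ← E.finrank_range_add_finrank_ker,
      ih (restrictToRange_pow_eq_zero hE)]
    simp only [jordanBlockCount_restrictToRange]

theorem finrank_centralizer_eq_sum_jordanBlockCount_sq {E : Module.End K V} {k : ℕ}
    (hE : E ^ k = 0) : Module.finrank K (Subalgebra.centralizer K {E}) =
      ∑ i ∈ Finset.range k, jordanBlockCount E i ^ 2 := by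
  induction k generalizing V with
  | zero =>
    have : Subsingleton (Module.End K V) := subsingleton_of_zero_eq_one hE.symm
    simp [Module.finrank_zero_of_subsingleton]
  | succ k ih =>
    rw [Finset.sum_range_succ', jordanBlockCount_zero, finrank_centralizer_eq_sq_add,
      ih (restrictToRange_pow_eq_zero hE), add_comm]
    simp only [jordanBlockCount_restrictToRange]

theorem finrank_sq_le_mul_finrank_centralizer {E : Module.End K V} {k : ℕ} (hE : E ^ k = 0) :
    Module.finrank K V ^ 2 ≤ k * Module.finrank K (Subalgebra.centralizer K {E}) := by
  rw [finrank_eq_sum_jordanBlockCount hE, finrank_centralizer_eq_sum_jordanBlockCount_sq hE]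
  simpa using sq_sum_le_card_mul_sum_sq (s := Finset.range k) (f := jordanBlockCount E)

theorem finrank_centralizer_modEq_two {E : Module.End K V} (hE : IsNilpotent E) :
    Module.finrank K (Subalgebra.centralizer K {E}) ≡ Module.finrank K V [MOD 2] := by
  obtain ⟨k, hE⟩ := hE
  rw [finrank_eq_sum_jordanBlockCount hE, finrank_centralizer_eq_sum_jordanBlockCount_sq hE]
  refine Nat.ModEq.sum fun i _ => (ZMod.natCast_eq_natCast_iff _ _ _).1 ?_
  rw [Nat.cast_pow]
  exact ZMod.pow_card _

end NilpotentCommutant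

section Brick

variable {m n : Type*} [Fintype m] [Fintype n] [DecidableEq m]

/-- The map `(P, Q) ↦ P B - B Q` measuring the failure of a pair of endomorphisms to be compatible
with the action `B` of the arrow; it is the last map of the left exact sequence of `End_H(V)`. -/
def arrowDefect {R : Type*} [CommRing R] (B : Matrix m n R) :
    Matrix m m R × Matrix n n R →ₗ[R] Matrix m n R :=
  (mulRightLinearMap m R B).coprod (-mulLeftLinearMap n R B)

/-- The space `End_H(V)` of the representation `V` with loop action `E` and arrow action `B`, as
pairs of endomorphisms of `V(1)` and `V(2)`. -/
def representationEnd {R : Type*} [CommRing R] (E : Matrix m m R) (B : Matrix m n R) :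
    Submodule R (Matrix m m R × Matrix n n R) :=
  (Subalgebra.toSubmodule (Subalgebra.centralizer R {E})).prod ⊤ ⊓ LinearMap.ker (arrowDefect B)

lemma mem_representationEnd {R : Type*} [CommRing R] {E : Matrix m m R} {B : Matrix m n R}
    {P : Matrix m m R} {Q : Matrix n n R} :
    (P, Q) ∈ representationEnd E B ↔ P * E = E * P ∧ P * B = B * Q := by
  simp [representationEnd, arrowDefect, mem_centralizer_singleton, ← sub_eq_add_neg, sub_eq_zero,
    eq_comm]

variable {K}

lemma finrank_centralizer_add_card_sq_le (E : Matrix m m K) (B : Matrix m n K) :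
    Module.finrank K (Subalgebra.centralizer K {E}) + Fintype.card n ^ 2 ≤
      Fintype.card m * Fintype.card n + Module.finrank K (representationEnd E B) := by
  have h := finrank_le_finrank_add_finrank_inf_ker (arrowDefect B)
    ((Subalgebra.toSubmodule (Subalgebra.centralizer K {E})).prod ⊤)
  rwa [finrank_submodule_prod, finrank_top, Module.finrank_matrix, Module.finrank_matrix,
    Module.finrank_self, mul_one, mul_one, ← sq] at h

lemma finrank_representationEnd_le_one [DecidableEq n] {E : Matrix m m K} {B : Matrix m n K}
    (hbrick : ∀ (P : Matrix m m K) (Q : Matrix n n K), P * E = E * P → P * B = B * Q →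
      ∃ c : K, P = c • (1 : Matrix m m K) ∧ Q = c • (1 : Matrix n n K)) :
    Module.finrank K (representationEnd E B) ≤ 1 := by
  have h_scalar : representationEnd E B ≤ K ∙ (1 : Matrix m m K × Matrix n n K) := by
    rintro ⟨P, Q⟩ hPQ
    obtain ⟨hE, hB⟩ := mem_representationEnd.1 hPQ
    obtain ⟨c, rfl, rfl⟩ := hbrick P Q hE hB
    exact Submodule.mem_span_singleton.2 ⟨c, rfl⟩
  calc Module.finrank K (representationEnd E B)
      ≤ Module.finrank K ↥(K ∙ (1 : Matrix m m K × Matrix n n K)) :=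
        Submodule.finrank_mono h_scalar
    _ ≤ 1 := by simpa using finrank_span_le_card {(1 : Matrix m m K × Matrix n n K)}

end Brick

lemma eq_of_sq_le_four_mul_of_modEq_two {r s d : ℕ} (hs : s ≤ 3)
    (h_lower : (4 * r + s) ^ 2 ≤ 4 * d) (h_upper : 4 * d ≤ (4 * r + s) ^ 2 + 4)
    (h_parity : d ≡ 4 * r + s [MOD 2]) : d = 4 * r ^ 2 + 2 * r * s + s := by
  rw [Nat.ModEq] at h_parity
  ring_nf at h_lower h_upper ⊢
  interval_cases s <;> lia

theorem stmt_9_general {m n : Type*} [Fintype m] [DecidableEq m] [Fintype n]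
    [DecidableEq n] {r s : ℕ} (hm : Fintype.card m = 4 * r + s) (hs : s ≤ 3)
    {E : Matrix m m K} (hE : E ^ 4 = 0) {B : Matrix m n K}
    (hbrick : ∀ (P : Matrix m m K) (Q : Matrix n n K), P * E = E * P → P * B = B * Q →
      ∃ c : K, P = c • (1 : Matrix m m K) ∧ Q = c • (1 : Matrix n n K)) :
    Module.finrank K (Subalgebra.centralizer K {E}) = 4 * r ^ 2 + 2 * r * s + s := by
  have hE' : toLinAlgEquiv' E ^ 4 = 0 := by rw [← map_pow, hE, map_zero]
  have h_lower := finrank_sq_le_mul_finrank_centralizer hE'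
  have h_parity := finrank_centralizer_modEq_two ⟨4, hE'⟩
  rw [finrank_centralizer_singleton_algEquiv, Module.finrank_fintype_fun_eq_card, hm]
    at h_lower h_parity
  have h_brick := finrank_centralizer_add_card_sq_le E B
  have h_one := finrank_representationEnd_le_one hbrick
  have h_upper : 4 * Module.finrank K (Subalgebra.centralizer K {E}) ≤ (4 * r + s) ^ 2 + 4 := by
    rw [hm] at h_brick
    zify at h_brick h_one ⊢
    linarith [sq_nonneg ((4 * r + s : ℤ) - 2 * Fintype.card n)]
  exact eq_of_sq_le_four_mul_of_modEq_two hs h_lower h_upper h_parity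

/-- Let H = KQ/(ε⁴) of type 𝔹ℂ̃₁ and let V be a brick, given by the
ε-action E on V(1) = K^{v₁} (with E⁴ = 0) and the α-action B : V(2) = K^{v₂} → V(1).
Then E has maximal rank among operators with fourth power zero: writing v₁ = 4r + s
with 0 ≤ s ≤ 3, the commutant of E (that is End_{K[x]/(x⁴)}(V(1)), the kernel of
P ↦ E·P − P·E) has dimension 4r² + 2rs + s. -/
theorem stmt_9 [IsAlgClosed K] [CharZero K]
    (v1 v2 r s : ℕ) (hv : v1 = 4 * r + s) (hs : s ≤ 3)
    (E : Matrix (Fin v1) (Fin v1) K) (hE : E ^ 4 = 0)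
    (B : Matrix (Fin v1) (Fin v2) K)
    (hbrick : ∀ (P : Matrix (Fin v1) (Fin v1) K) (Q : Matrix (Fin v2) (Fin v2) K),
      P * E = E * P → P * B = B * Q →
      ∃ c : K, P = c • (1 : Matrix (Fin v1) (Fin v1) K)
        ∧ Q = c • (1 : Matrix (Fin v2) (Fin v2) K)) :
    Module.finrank K
      (LinearMap.ker (LinearMap.mulLeft K E - LinearMap.mulRight K E))
      = 4 * r ^ 2 + 2 * r * s + s := by
  rw [← toSubmodule_centralizer_singleton]
  exact stmt_9_general K (by rw [Fintype.card_fin, hv]) hs hE hbrick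

end
end

section
/- Let H = KQ/(ε⁴) of type ℬ𝒞̃₁ and let d = (d₁,d₂) be a dimension vector; write d₁ = 4r + s with 0 ≤ s < 4. Then the variety Rep(H,d) is irreducible of dimension d₁d₂ + d₁² − 4r² − 2sr − s. -/
noncomputable section

open Matrix

variable (K : Type*) [Field K]

/-- The Zariski topology on affine space ι → K. -/
def zariskiAff (ι : Type*) [Fintype ι] : TopologicalSpace (ι → K) :=
  TopologicalSpace.generateFrom
    {U | ∃ p : MvPolynomial ι K, U = {x | MvPolynomial.eval x p ≠ 0}}

/-!
A matrix `N` with `N ^ m = 0` and `m * r + s` rows is conjugate to a block strictly upper triangular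
matrix with `m - s` blocks of size `r` and `s` blocks of size `r + 1`. Over an infinite field the
nilpotent matrices are therefore the image of an affine space under `(g, U) ↦ g * U * adj g`, hence
irreducible.

For the dimension, the conjugating matrix can be taken block lower unipotent, at the cost of letting
the assignment of the basis vectors to the blocks depend on `N`. There are finitely many such
assignments, so by irreducibility one of the maps `(L, U) ↦ L * U * L⁻¹` is dominant. Its source is
an affine space with one coordinate for each matrix entry outside of the diagonal blocks. At `L = 1`
and `U` a generic matrix in normal form its differential is `(Z, Y) ↦ Y + Z * U - U * Z`, which is
injective. As a map between affine spaces with injective differential at one point pulls a suitable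
coordinate system back to algebraically independent polynomials, whatever the characteristic, the
dimension of the image is the number of entries outside of the diagonal blocks.
-/

open MvPolynomial

section Zariski

attribute [local instance] zariskiAff

variable {K} {σ τ : Type*}

theorem eval_comap_apply (φ : MvPolynomial σ K →ₐ[K] MvPolynomial τ K) (y : τ → K)
    (f : MvPolynomial σ K) : eval (comap φ y) f = eval y (φ f) := by
  have h : aeval (comap φ y) = (aeval y).comp φ := by
    ext
    simp
  simpa only [aeval_eq_eval, AlgHom.comp_apply] using DFunLike.congr_fun h f

theorem vanishingIdeal_range_comap [Infinite K]
    (φ : MvPolynomial σ K →ₐ[K] MvPolynomial τ K) :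
    vanishingIdeal K (Set.range (comap φ)) = RingHom.ker φ := by
  ext f
  rw [mem_vanishingIdeal_iff, Set.forall_mem_range, RingHom.mem_ker]
  simp only [aeval_eq_eval, eval_comap_apply]
  exact ⟨fun h => MvPolynomial.funext fun y => by rw [h y, map_zero], fun h y => by
    rw [h, map_zero]⟩

variable [Fintype σ]

theorem isOpen_setOf_eval_ne_zero (p : MvPolynomial σ K) : IsOpen {x : σ → K | eval x p ≠ 0} :=
  TopologicalSpace.isOpen_generateFrom_of_mem ⟨p, rfl⟩

theorem isClosed_setOf_eval_eq_zero (p : MvPolynomial σ K) :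
    IsClosed {x : σ → K | eval x p = 0} :=
  isOpen_compl_iff.1 (isOpen_setOf_eval_ne_zero p)

theorem isTopologicalBasis_setOf_eval_ne_zero :
    TopologicalSpace.IsTopologicalBasis
      {U : Set (σ → K) | ∃ p : MvPolynomial σ K, U = {x | eval x p ≠ 0}} where
  exists_subset_inter := by
    rintro _ ⟨p, rfl⟩ _ ⟨q, rfl⟩ x hx
    have hpq : {x | eval x (p * q) ≠ 0} = {x | eval x p ≠ 0} ∩ {x | eval x q ≠ 0} := by
      ext y
      simp
    exact ⟨_, ⟨p * q, rfl⟩, hpq ▸ hx, hpq.le⟩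
  sUnion_eq := Set.eq_univ_of_forall fun x => ⟨_, ⟨1, rfl⟩, by simp⟩
  eq_generateFrom := rfl

theorem isClosed_zeroLocus (I : Ideal (MvPolynomial σ K)) : IsClosed (zeroLocus K I) := by
  have : zeroLocus K I = ⋂ p ∈ I, {x | eval x p = 0} := by
    ext x
    simp [aeval_eq_eval]
  rw [this]
  exact isClosed_biInter fun p _ => isClosed_setOf_eval_eq_zero p

theorem closure_eq_zeroLocus_vanishingIdeal (Z : Set (σ → K)) :
    closure Z = zeroLocus K (vanishingIdeal K Z) := by
  refine (closure_minimal (zeroLocus_vanishingIdeal_le Z) (isClosed_zeroLocus _)).antisymm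
    fun x hx => ?_
  rw [isTopologicalBasis_setOf_eval_ne_zero.mem_closure_iff]
  rintro _ ⟨p, rfl⟩ hpx
  by_contra hdisj
  refine hpx (hx p fun y hy => ?_)
  by_contra hpy
  exact hdisj ⟨y, hpy, hy⟩

theorem zeroLocus_vanishingIdeal_of_isClosed {Z : Set (σ → K)} (hZ : IsClosed Z) :
    zeroLocus K (vanishingIdeal K Z) = Z := by
  rw [← closure_eq_zeroLocus_vanishingIdeal, hZ.closure_eq]

theorem vanishingIdeal_closure (Z : Set (σ → K)) :
    vanishingIdeal K (closure Z) = vanishingIdeal K Z := by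
  rw [closure_eq_zeroLocus_vanishingIdeal]
  exact zeroLocus_vanishingIdeal_galoisConnection.u_l_u_eq_u (OrderDual.toDual Z)

theorem isPrime_vanishingIdeal_of_isIrreducible {Z : Set (σ → K)} (hZ : IsIrreducible Z) :
    (vanishingIdeal K Z).IsPrime := by
  obtain ⟨⟨x, hx⟩, hirr⟩ := hZ
  refine ⟨(Ideal.ne_top_iff_one _).2 fun h => by simpa using h x hx, fun {p q} hpq => ?_⟩
  by_contra! hcon
  simp only [mem_vanishingIdeal_iff, not_forall, exists_prop] at hcon
  obtain ⟨⟨y, hy, hpy⟩, ⟨z, hz, hqz⟩⟩ := hcon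
  obtain ⟨w, hw, hpw, hqw⟩ := hirr _ _ (isOpen_setOf_eval_ne_zero p)
    (isOpen_setOf_eval_ne_zero q) ⟨y, hy, hpy⟩ ⟨z, hz, hqz⟩
  exact mul_ne_zero hpw hqw (by simpa [aeval_eq_eval] using hpq w hw)

theorem isIrreducible_of_isPrime_vanishingIdeal {Z : Set (σ → K)}
    (hZ : (vanishingIdeal K Z).IsPrime) : IsIrreducible Z := by
  refine ⟨Set.nonempty_iff_ne_empty.2 fun h => hZ.ne_top (h ▸ vanishingIdeal_empty), ?_⟩
  rintro u v hu hv ⟨y, hy, hyu⟩ ⟨z, hz, hzv⟩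
  obtain ⟨_, ⟨p, rfl⟩, hpy, hpu⟩ :=
    isTopologicalBasis_setOf_eval_ne_zero.exists_subset_of_mem_open hyu hu
  obtain ⟨_, ⟨q, rfl⟩, hqz, hqv⟩ :=
    isTopologicalBasis_setOf_eval_ne_zero.exists_subset_of_mem_open hzv hv
  have hpq : p * q ∉ vanishingIdeal K Z := fun h =>
    (hZ.mem_or_mem h).elim (fun hp => hpy (hp y hy)) fun hq => hqz (hq z hz)
  simp only [mem_vanishingIdeal_iff, not_forall, exists_prop, map_mul, mul_eq_zero,
    not_or] at hpq
  obtain ⟨w, hw, hpw, hqw⟩ := hpq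
  exact ⟨w, hw, hpu hpw, hqv hqw⟩

theorem isIrreducible_iff_isPrime_vanishingIdeal {Z : Set (σ → K)} :
    IsIrreducible Z ↔ (vanishingIdeal K Z).IsPrime :=
  ⟨isPrime_vanishingIdeal_of_isIrreducible, isIrreducible_of_isPrime_vanishingIdeal⟩

theorem isIrreducible_range_comap [Infinite K]
    (φ : MvPolynomial σ K →ₐ[K] MvPolynomial τ K) : IsIrreducible (Set.range (comap φ)) := by
  rw [isIrreducible_iff_isPrime_vanishingIdeal, vanishingIdeal_range_comap]
  exact RingHom.ker_isPrime _

theorem isIrreducible_of_image_val {X : Type*} [TopologicalSpace X] {V : Set X} {Z : Set V}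
    (hZ : IsIrreducible (Subtype.val '' Z)) : IsIrreducible Z := by
  refine ⟨hZ.nonempty.of_image, ?_⟩
  rintro _ _ ⟨u, hu, rfl⟩ ⟨v, hv, rfl⟩ ⟨x, hx, hxu⟩ ⟨y, hy, hyv⟩
  obtain ⟨_, ⟨w, hw, rfl⟩, hwu, hwv⟩ := hZ.2 u v hu hv ⟨x, ⟨x, hx, rfl⟩, hxu⟩
    ⟨y, ⟨y, hy, rfl⟩, hyv⟩
  exact ⟨w, hw, hwu, hwv⟩

/-- The inclusion-reversing bijection between the irreducible closed subsets of an affine variety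
and the prime ideals of its coordinate ring. -/
def irreducibleClosedsOrderIso [IsAlgClosed K] {V : Set (σ → K)} (hV : IsClosed V) :
    TopologicalSpace.IrreducibleCloseds V ≃o
      (PrimeSpectrum.zeroLocus (vanishingIdeal K V : Set (MvPolynomial σ K)))ᵒᵈ := by
  have closed_image (Z : TopologicalSpace.IrreducibleCloseds V) :
      IsClosed (Subtype.val '' (Z : Set V)) :=
    hV.isClosedMap_subtype_val _ Z.isClosed
  refine RelIso.ofSurjective (OrderEmbedding.ofMapLEIff (fun Z => OrderDual.toDual
    ⟨⟨vanishingIdeal K (Subtype.val '' (Z : Set V)), ?_⟩, ?_⟩) ?_) ?_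
  · exact isPrime_vanishingIdeal_of_isIrreducible
      (Z.isIrreducible.image _ continuous_subtype_val.continuousOn)
  · exact vanishingIdeal_anti_mono (Subtype.coe_image_subset V Z)
  · intro Z W
    change vanishingIdeal K _ ≤ vanishingIdeal K _ ↔ _
    rw [← le_zeroLocus_iff_le_vanishingIdeal,
      zeroLocus_vanishingIdeal_of_isClosed (closed_image W)]
    exact Set.image_subset_image_iff Subtype.val_injective
  · rintro ⟨⟨P, hP⟩, hVP : vanishingIdeal K V ≤ P⟩
    have himage : Subtype.val '' (Subtype.val ⁻¹' zeroLocus K P : Set V) = zeroLocus K P := by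
      rw [Subtype.image_preimage_coe, Set.inter_eq_right,
        ← zeroLocus_vanishingIdeal_of_isClosed hV]
      exact zeroLocus_anti_mono hVP
    have hPZ := MvPolynomial.IsPrime.vanishingIdeal_zeroLocus (K := K) P
    refine ⟨⟨Subtype.val ⁻¹' zeroLocus K P, isIrreducible_of_image_val ?_,
      (isClosed_zeroLocus P).preimage continuous_subtype_val⟩, ?_⟩
    · rwa [himage, isIrreducible_iff_isPrime_vanishingIdeal, hPZ]
    · refine congrArg OrderDual.toDual (Subtype.ext (PrimeSpectrum.ext ?_))
      change vanishingIdeal K (Subtype.val '' (Subtype.val ⁻¹' zeroLocus K P : Set V)) = P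
      rw [himage, hPZ]

theorem topologicalKrullDim_eq_ringKrullDim [IsAlgClosed K] {V : Set (σ → K)} (hV : IsClosed V) :
    topologicalKrullDim V = ringKrullDim (MvPolynomial σ K ⧸ vanishingIdeal K V) := by
  rw [ringKrullDim_quotient, topologicalKrullDim,
    Order.krullDim_eq_of_orderIso (irreducibleClosedsOrderIso hV), Order.krullDim_orderDual]

end Zariski

section Dimension

theorem ringKrullDim_eq_of_isIntegral {R S : Type*} [CommRing R] [CommRing S] [IsDomain S]
    [Algebra R S] [FaithfulSMul R S] [Algebra.IsIntegral R S] :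
    ringKrullDim S = ringKrullDim R := by
  refine le_antisymm ?_ (iSup_le fun l => ?_)
  · exact Order.krullDim_le_of_strictMono (PrimeSpectrum.comap (algebraMap R S)) fun _ _ =>
      Ideal.IsIntegral.comap_lt_comap (R := R)
  · have hker : RingHom.ker (algebraMap R S) = ⊥ :=
      (RingHom.injective_iff_ker_eq_bot _).1 (FaithfulSMul.algebraMap_injective R S)
    obtain ⟨Q, _, hQ⟩ := Ideal.exists_ideal_over_prime_of_isIntegral_of_isDomain (S := S)
      l.head.asIdeal (hker ▸ bot_le)
    have : Q.LiesOver l.head.asIdeal := ⟨hQ.symm⟩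
    obtain ⟨L, hL, -⟩ := Ideal.exists_ltSeries_of_hasGoingUp l Q
    exact hL ▸ Order.LTSeries.length_le_krullDim L

variable {K} {A : Type*} [CommRing A] [IsDomain A] [Algebra K A]

theorem ringKrullDim_eq_toNat_trdeg [Algebra.FiniteType K A] :
    ringKrullDim A = (Cardinal.toNat (Algebra.trdeg K A) : ℕ) := by
  obtain ⟨d, g, hg, hgi⟩ := exists_integral_inj_algHom_of_fg K A
  algebraize [g.toRingHom]
  have : FaithfulSMul (MvPolynomial (Fin d) K) A := (faithfulSMul_iff_algebraMap_injective _ _).2 hg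
  have : IsScalarTower K (MvPolynomial (Fin d) K) A :=
    IsScalarTower.of_algebraMap_eq' (AlgHom.comp_algebraMap g).symm
  have hbasis := (IsTranscendenceBasis.mvPolynomial (Fin d) K).algebraMap_comp (A := A)
  have htrdeg := hbasis.lift_cardinalMk_eq_trdeg
  rw [Cardinal.mk_fin, Cardinal.lift_natCast, Cardinal.lift_id'] at htrdeg
  rw [ringKrullDim_eq_of_isIntegral (R := MvPolynomial (Fin d) K), ← htrdeg]
  simp

theorem ringKrullDim_eq_card_of_injective [Algebra.FiniteType K A] {τ : Type*} [Fintype τ]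
    {x : τ → A} (hx : AlgebraicIndependent K x) {φ : A →ₐ[K] MvPolynomial τ K}
    (hφ : Function.Injective φ) : ringKrullDim A = Fintype.card τ := by
  have hle := lift_trdeg_le_of_injective φ hφ
  have hge := hx.lift_cardinalMk_le_trdeg
  rw [MvPolynomial.trdeg_of_isDomain] at hle
  have htrdeg : Algebra.trdeg K A = Fintype.card τ :=
    le_antisymm (by simpa using hle) (by simpa using hge)
  rw [ringKrullDim_eq_toNat_trdeg (K := K), htrdeg, Cardinal.toNat_natCast]

end Dimension

section Jacobian

theorem sub_mem_pow_succ_of_sub_mem_sq {A : Type*} [CommRing A] {I : Ideal A} {f : A →+* A}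
    (hf : ∀ x, f x - x ∈ I ^ 2) {n : ℕ} {x : A} (hx : x ∈ I ^ n) : f x - x ∈ I ^ (n + 1) := by
  induction n generalizing x with
  | zero => exact Ideal.pow_le_pow_right one_le_two (hf x)
  | succ n ih =>
    rw [pow_succ'] at hx
    induction hx using Submodule.mul_induction_on' with
    | mem_mul_mem a ha b hb =>
      have hfb : f b ∈ I ^ n :=
        (Submodule.sub_mem_iff_left _ hb).1 (Ideal.pow_le_pow_right n.le_succ (ih hb))
      have hsplit : f (a * b) - a * b = f b * (f a - a) + a * (f b - b) := by
        rw [map_mul]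
        ring
      rw [hsplit]
      exact add_mem (pow_add I n 2 ▸ Ideal.mul_mem_mul hfb (hf a))
        (pow_succ' I (n + 1) ▸ Ideal.mul_mem_mul ha (ih hb))
    | add a _ b _ iha ihb =>
      rw [map_add, add_sub_add_comm]
      exact add_mem iha ihb

theorem injective_of_sub_mem_sq {A : Type*} [CommRing A] {I : Ideal A} (hI : ⨅ n : ℕ, I ^ n = ⊥)
    {f : A →+* A} (hf : ∀ x, f x - x ∈ I ^ 2) : Function.Injective f := by
  refine (injective_iff_map_eq_zero f).2 fun x hx => ?_
  have hmem (n : ℕ) : x ∈ I ^ n := by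
    induction n with
    | zero => simp
    | succ n ih => simpa [hx] using sub_mem_pow_succ_of_sub_mem_sq hf ih
  rwa [← Submodule.mem_iInf, hI, Submodule.mem_bot] at hmem

variable {K} {σ τ : Type*}

theorem algebraicIndependent_of_sub_X_mem_sq [Finite τ] (y : τ → K) {G : τ → MvPolynomial τ K}
    (hG : ∀ p, G p - X p ∈ RingHom.ker (eval y) ^ 2) : AlgebraicIndependent K G := by
  have hcongr : (Ideal.Quotient.mkₐ K (RingHom.ker (eval y) ^ 2)).comp (aeval G) =
      Ideal.Quotient.mkₐ K _ := by
    ext p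
    simpa using Ideal.Quotient.eq.2 (hG p)
  refine injective_of_sub_mem_sq (f := (aeval G).toRingHom)
    (Ideal.iInf_pow_eq_bot_of_isDomain _ (RingHom.ker_ne_top (eval y)))
    fun f => Ideal.Quotient.eq.1 (DFunLike.congr_fun hcongr f)

theorem sub_taylor_mem_sq [Fintype τ] (y : τ → K) (f : MvPolynomial τ K) :
    f - (C (eval y f) + ∑ p, C (eval y (pderiv p f)) * (X p - C (y p))) ∈
      RingHom.ker (eval y) ^ 2 := by
  classical
  have X_sub_mem (p : τ) : X p - C (y p) ∈ RingHom.ker (eval y) := by simp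
  induction f using MvPolynomial.induction_on with
  | C a => simp
  | add f g hf hg =>
    convert add_mem hf hg using 1
    simp only [map_add, add_mul, Finset.sum_add_distrib]
    ring
  | mul_X f q hf =>
    have hsum : ∑ p, C (eval y (pderiv p (f * X q))) * (X p - C (y p)) =
        C (eval y f) * (X q - C (y q)) +
          C (y q) * ∑ p, C (eval y (pderiv p f)) * (X p - C (y p)) := by
      simp only [pderiv_mul, pderiv_X, map_add, map_mul, eval_X, add_mul,
        Finset.sum_add_distrib, Finset.mul_sum]
      rw [add_comm]
      refine congrArg₂ _ ?_ (Finset.sum_congr rfl fun p _ => by ring)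
      rw [Fintype.sum_eq_single q fun p hp => by simp [hp]]
      simp
    have hlin : ∑ p, C (eval y (pderiv p f)) * (X p - C (y p)) ∈ RingHom.ker (eval y) :=
      sum_mem fun p _ => Ideal.mul_mem_left _ _ (X_sub_mem p)
    convert add_mem (Ideal.mul_mem_right (X q) _ hf)
      (pow_two (RingHom.ker (eval y)) ▸ Ideal.mul_mem_mul hlin (X_sub_mem q)) using 1
    rw [hsum, map_mul, eval_X, C_mul]
    ring

theorem algebraicIndependent_of_eval_pderiv [Finite τ] [DecidableEq τ] {y : τ → K}
    {G : τ → MvPolynomial τ K} (hG : ∀ p, eval y (G p) = y p)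
    (hdG : ∀ p q, eval y (pderiv q (G p)) = (1 : Matrix τ τ K) p q) :
    AlgebraicIndependent K G := by
  cases nonempty_fintype τ
  refine algebraicIndependent_of_sub_X_mem_sq y fun p => ?_
  convert sub_taylor_mem_sq y (G p) using 1
  simp [hG, hdG, Matrix.one_apply]

/-- The evaluation of polynomials at the point `y + ε v` over the dual numbers: its second
component is the derivative at `y` in the direction `v`. -/
def evalDual (y v : τ → K) : MvPolynomial τ K →ₐ[K] DualNumber K :=
  aeval fun p => TrivSqZeroExt.inl (y p) + TrivSqZeroExt.inr (v p)

theorem fst_evalDual (y v : τ → K) (f : MvPolynomial τ K) : (evalDual y v f).fst = eval y f := by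
  have h : (TrivSqZeroExt.fstHom K K K).comp (evalDual y v) = aeval y := by
    ext p
    simp [evalDual]
  rw [← aeval_eq_eval, ← h]
  rfl

theorem evalDual_X (y v : τ → K) (p : τ) :
    evalDual y v (X p) = TrivSqZeroExt.inl (y p) + TrivSqZeroExt.inr (v p) :=
  aeval_X _ p

theorem snd_evalDual [Fintype τ] (y v : τ → K) (f : MvPolynomial τ K) :
    (evalDual y v f).snd = ∑ p, eval y (pderiv p f) * v p := by
  classical
  induction f using MvPolynomial.induction_on with
  | C a => simp [evalDual, TrivSqZeroExt.algebraMap_eq_inl]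
  | add f g hf hg =>
    simp only [map_add, TrivSqZeroExt.snd_add, hf, hg, add_mul, Finset.sum_add_distrib]
  | mul_X f q hf =>
    have hX : ∑ p, eval y (pderiv p (X q)) * v p = v q := by
      rw [Fintype.sum_eq_single q fun p hp => by simp [hp]]
      simp
    rw [map_mul, TrivSqZeroExt.snd_mul, hf, fst_evalDual, fst_evalDual, evalDual_X, eval_X]
    simp only [TrivSqZeroExt.snd_add, TrivSqZeroExt.snd_inl, TrivSqZeroExt.snd_inr, zero_add,
      smul_eq_mul, op_smul_eq_mul, ← hX, pderiv_mul, map_add, map_mul, eval_X, Finset.mul_sum,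
      Finset.sum_mul, ← Finset.sum_add_distrib]
    exact Finset.sum_congr rfl fun p _ => by ring

theorem exists_algebraicIndependent_map_of_evalDual [Finite σ] [Finite τ]
    (φ : MvPolynomial σ K →ₐ[K] MvPolynomial τ K) {y : τ → K}
    (hφ : ∀ v, (∀ q, (evalDual y v (φ (X q))).snd = 0) → v = 0) :
    ∃ g : τ → MvPolynomial σ K, AlgebraicIndependent K (φ ∘ g) := by
  classical
  cases nonempty_fintype σ
  cases nonempty_fintype τ
  let J : Matrix σ τ K := of fun q p => eval y (pderiv p (φ (X q)))
  have hker : LinearMap.ker (toLin' J) = ⊥ := LinearMap.ker_eq_bot'.2 fun v hv =>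
    hφ v fun q => (snd_evalDual y v _).trans (congrFun hv q)
  obtain ⟨l, hl⟩ := (toLin' J).exists_leftInverse_of_injective hker
  have hlJ : LinearMap.toMatrix' l * J = 1 := by
    simpa only [LinearMap.toMatrix'_comp, LinearMap.toMatrix'_toLin', LinearMap.toMatrix'_id]
      using congrArg LinearMap.toMatrix' hl
  refine ⟨fun p => C (y p) + ∑ q, C (LinearMap.toMatrix' l p q) * (X q - C (eval y (φ (X q)))),
    algebraicIndependent_of_eval_pderiv (y := y) (fun p => ?_) fun p p' => ?_⟩
  · simp
  · rw [← hlJ, Matrix.mul_apply]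
    simp [J]

theorem ringKrullDim_quotient_ker_of_evalDual [Finite σ] [Fintype τ]
    {φ : MvPolynomial σ K →ₐ[K] MvPolynomial τ K} {y : τ → K}
    (hφ : ∀ v, (∀ q, (evalDual y v (φ (X q))).snd = 0) → v = 0) :
    ringKrullDim (MvPolynomial σ K ⧸ RingHom.ker φ) = Fintype.card τ := by
  obtain ⟨g, hg⟩ := exists_algebraicIndependent_map_of_evalDual φ hφ
  have : (RingHom.ker φ).IsPrime := RingHom.ker_isPrime _
  exact ringKrullDim_eq_card_of_injective (x := fun p => Ideal.Quotient.mk _ (g p))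
    (AlgebraicIndependent.of_comp (Ideal.kerLiftAlg φ) hg) (Ideal.kerLiftAlg_injective φ)

attribute [local instance] zariskiAff in
theorem topologicalKrullDim_closure_range_comap [IsAlgClosed K] [Fintype σ] [Fintype τ]
    {φ : MvPolynomial σ K →ₐ[K] MvPolynomial τ K} {y : τ → K}
    (hφ : ∀ v, (∀ q, (evalDual y v (φ (X q))).snd = 0) → v = 0) :
    topologicalKrullDim (closure (Set.range (comap φ))) = Fintype.card τ := by
  rw [topologicalKrullDim_eq_ringKrullDim isClosed_closure, vanishingIdeal_closure,
    vanishingIdeal_range_comap, ringKrullDim_quotient_ker_of_evalDual hφ]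

end Jacobian

section LinearAlgebra

open Module

section End

variable {K} {V : Type*} [AddCommGroup V] [Module K V] [FiniteDimensional K V]

theorem finrank_map_add_finrank_ker_inf (f : End K V) (U : Submodule K V) :
    finrank K (U.map f) + finrank K ↥(LinearMap.ker f ⊓ U) = finrank K U := by
  have h := (f.domRestrict U).finrank_range_add_finrank_ker
  rwa [LinearMap.range_domRestrict, ← Submodule.finrank_map_subtype_eq, LinearMap.ker_domRestrict,
    Submodule.map_comap_subtype, inf_comm] at h

theorem finrank_range_pow_add_sum_finrank_ker_inf_range_pow (f : End K V) (k : ℕ) :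
    finrank K (LinearMap.range (f ^ k)) +
      ∑ i ∈ Finset.range k, finrank K ↥(LinearMap.ker f ⊓ LinearMap.range (f ^ i)) =
        finrank K V := by
  induction k with
  | zero =>
    rw [pow_zero, Module.End.one_eq_id, LinearMap.range_id, finrank_top, Finset.range_zero,
      Finset.sum_empty, add_zero]
  | succ k ih =>
    rw [Finset.sum_range_succ, ← ih, ← finrank_map_add_finrank_ker_inf f (LinearMap.range (f ^ k)),
      ← LinearMap.range_comp, ← Module.End.mul_eq_comp, ← pow_succ']
    ring

theorem finrank_le_mul_finrank_ker {f : End K V} {k : ℕ} (hf : f ^ k = 0) :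
    finrank K V ≤ k * finrank K (LinearMap.ker f) := by
  have hsum := finrank_range_pow_add_sum_finrank_ker_inf_range_pow f k
  rw [hf, LinearMap.range_zero, finrank_bot, zero_add] at hsum
  rw [← hsum]
  simpa using Finset.sum_le_card_nsmul (Finset.range k) _ _
    fun i _ => Submodule.finrank_mono (R := K) inf_le_left

theorem succ_mul_finrank_range_pow_le {f : End K V} {m : ℕ} (hf : f ^ (m + 1) = 0) :
    (m + 1) * finrank K (LinearMap.range (f ^ m)) ≤ finrank K V := by
  have hker : LinearMap.range (f ^ m) ≤ LinearMap.ker f := by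
    rwa [LinearMap.range_le_ker_iff, ← Module.End.mul_eq_comp, ← pow_succ']
  have hanti {i : ℕ} (hi : i ∈ Finset.range (m + 1)) :
      LinearMap.range (f ^ m) ≤ LinearMap.ker f ⊓ LinearMap.range (f ^ i) := by
    refine le_inf hker ?_
    rw [← Nat.add_sub_of_le (Finset.mem_range_succ_iff.1 hi), pow_add]
    exact LinearMap.range_comp_le_range _ _
  rw [← finrank_range_pow_add_sum_finrank_ker_inf_range_pow f (m + 1)]
  refine le_add_left ?_
  simpa using Finset.card_nsmul_le_sum (Finset.range (m + 1)) _ _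
    fun i hi => Submodule.finrank_mono (R := K) (hanti hi)

theorem exists_submodule_finrank_eq {U U' : Submodule K V} (h : U ≤ U') {d : ℕ}
    (hU : finrank K U ≤ d) (hU' : d ≤ finrank K U') :
    ∃ W : Submodule K V, U ≤ W ∧ W ≤ U' ∧ finrank K W = d := by
  induction d, hU using Nat.le_induction with
  | base => exact ⟨U, le_rfl, h, rfl⟩
  | succ d _ ih =>
    obtain ⟨W, hUW, hWU', hW⟩ := ih (by omega)
    have hlt : W < U' := hWU'.lt_of_ne fun h => by
      subst h
      omega
    obtain ⟨x, hx, hxW⟩ := SetLike.exists_of_lt hlt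
    refine ⟨W ⊔ Submodule.span K {x}, hUW.trans le_sup_left, sup_le hWU' ?_, ?_⟩
    · rwa [Submodule.span_singleton_le_iff_mem]
    · rw [Submodule.finrank_sup_span_singleton hxW, hW]

theorem exists_range_le_le_ker_pow {f : End K V} {m r s : ℕ} (hf : f ^ (m + 1) = 0)
    (hV : finrank K V = (m + 1) * r + s) (hs : s ≤ m + 1) :
    ∃ W : Submodule K V, LinearMap.range f ≤ W ∧ W ≤ LinearMap.ker (f ^ m) ∧
      finrank K W = m * r + (s - 1) := by
  have hker := finrank_le_mul_finrank_ker hf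
  have hrange := succ_mul_finrank_range_pow_le hf
  have hf₁ := f.finrank_range_add_finrank_ker
  have hfm := (f ^ m).finrank_range_add_finrank_ker
  apply exists_submodule_finrank_eq
  · rw [LinearMap.range_le_ker_iff, ← Module.End.mul_eq_comp, ← pow_succ, hf]
  · suffices r + (s - (s - 1)) ≤ finrank K (LinearMap.ker f) by lia
    by_contra! hlt
    rcases s with _ | s
    · have : finrank K (LinearMap.ker f) < r := by lia
      nlinarith
    · have : finrank K (LinearMap.ker f) ≤ r := by lia
      nlinarith
  · suffices finrank K (LinearMap.range (f ^ m)) ≤ r + (s - (s - 1)) by lia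
    by_contra! hlt
    rcases s with _ | s
    · have : r < finrank K (LinearMap.range (f ^ m)) := by lia
      nlinarith
    · have : r + 2 ≤ finrank K (LinearMap.range (f ^ m)) := by lia
      nlinarith

end End

variable {K} {ι : Type*} [Finite ι]

theorem exists_bijective_restrict (W : Submodule K (ι → K)) :
    ∃ S : Set ι, Function.Bijective ((LinearMap.funLeft K K ((↑) : S → ι)).domRestrict W) := by
  have := Fintype.ofFinite ι
  classical
  let coord (i : ι) : Dual K W := (LinearMap.proj i).domRestrict W
  obtain ⟨S, -, -, hspan, hS⟩ :=
    exists_linearIndepOn_extension (linearIndepOn_empty K coord) (Set.empty_subset Set.univ)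
  have hinj : Function.Injective ((LinearMap.funLeft K K ((↑) : S → ι)).domRestrict W) := by
    rw [injective_iff_map_eq_zero]
    intro w hw
    have hle : Submodule.span K (coord '' S) ≤ LinearMap.ker (Dual.eval K W w) := by
      rw [Submodule.span_le]
      rintro _ ⟨i, hi, rfl⟩
      exact congrFun hw ⟨i, hi⟩
    exact Subtype.ext (funext fun i => hle (hspan ⟨i, Set.mem_univ i, rfl⟩))
  have hcard : finrank K (S → K) ≤ finrank K W := by
    rw [finrank_fintype_fun_eq_card, ← Subspace.dual_finrank_eq]
    exact hS.fintype_card_le_finrank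
  exact ⟨S, hinj, (LinearMap.injective_iff_surjective_of_finrank_eq_finrank
    ((LinearMap.finrank_le_finrank_of_injective hinj).antisymm hcard)).1 hinj⟩

end LinearAlgebra

section FullRankFactorization

variable {K} {ι : Type*} [Fintype ι] [DecidableEq ι]

theorem mul_pow_mul_comm {R n : Type*} [Semiring R] [Fintype n] [DecidableEq n]
    (E : Matrix ι n R) (F : Matrix n ι R) (k : ℕ) : (E * F) ^ k * E = E * (F * E) ^ k := by
  induction k with
  | zero => rw [pow_zero, pow_zero, Matrix.one_mul, Matrix.mul_one]
  | succ k ih => rw [pow_succ', Matrix.mul_assoc, ih, pow_succ', Matrix.mul_assoc E,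
      Matrix.mul_assoc F]

theorem exists_eq_mul_of_range_le (N : Matrix ι ι K) {W : Submodule K (ι → K)}
    (hW : LinearMap.range N.toLin' ≤ W) :
    ∃ (S : Set ι) (_ : Fintype S) (E : Matrix ι S K) (F : Matrix S ι K),
      Fintype.card S = Module.finrank K W ∧ E.submatrix ((↑) : S → ι) id = 1 ∧ N = E * F ∧
        LinearMap.range E.mulVecLin ≤ W := by
  classical
  obtain ⟨S, hS⟩ := exists_bijective_restrict W
  let e := LinearEquiv.ofBijective _ hS
  let E : Matrix ι S K := (W.subtype ∘ₗ e.symm.toLinearMap).toMatrix'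
  have hE (u : S → K) : E *ᵥ u = (e.symm u : ι → K) := LinearMap.toMatrix'_mulVec _ _
  refine ⟨S, inferInstance, E, N.submatrix Subtype.val id, ?_, ?_, ?_, ?_⟩
  · rw [e.finrank_eq, Module.finrank_fintype_fun_eq_card]
  · refine Matrix.ext_of_mulVec_single fun j => ?_
    rw [one_mulVec]
    trans e (e.symm (Pi.single j 1))
    · funext i
      exact congrFun (hE _) i
    · exact e.apply_symm_apply _
  · refine Matrix.ext_of_mulVec_single fun j => ?_
    rw [← mulVec_mulVec, hE]
    have hmem : N *ᵥ Pi.single j 1 ∈ W := hW ⟨_, Matrix.toLin'_apply N _⟩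
    exact congrArg Subtype.val (e.symm_apply_apply ⟨_, hmem⟩).symm
  · rintro _ ⟨u, rfl⟩
    rw [Matrix.mulVecLin_apply, hE]
    exact (e.symm u).2

theorem exists_eq_mul_of_pow_succ_eq_zero {N : Matrix ι ι K} {m r s : ℕ} (hN : N ^ (m + 1) = 0)
    (hcard : Fintype.card ι = (m + 1) * r + s) (hs : s ≤ m + 1) :
    ∃ (S : Set ι) (_ : Fintype S) (E : Matrix ι S K) (F : Matrix S ι K),
      Fintype.card S = m * r + (s - 1) ∧ E.submatrix ((↑) : S → ι) id = 1 ∧ N = E * F ∧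
        (F * E) ^ m = 0 := by
  obtain ⟨W, hrange, hker, hW⟩ := exists_range_le_le_ker_pow (f := N.toLin')
    (by rw [← Matrix.toLin'_pow, hN, map_zero])
    (by rw [Module.finrank_fintype_fun_eq_card, hcard]) hs
  obtain ⟨S, _hS, E, F, hS, hE, hEF, hEW⟩ := exists_eq_mul_of_range_le N hrange
  refine ⟨S, ‹_›, E, F, hS.trans hW, hE, hEF, ?_⟩
  have hNE : N ^ m * E = 0 := by
    refine Matrix.ext_of_mulVec_single fun j => ?_
    have := hker (hEW ⟨Pi.single j 1, rfl⟩)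
    rwa [← Matrix.toLin'_pow, LinearMap.mem_ker, Matrix.toLin'_apply, Matrix.mulVecLin_apply,
      mulVec_mulVec, ← zero_mulVec (Pi.single j 1)] at this
  calc
    (F * E) ^ m = (E * (F * E) ^ m).submatrix ((↑) : S → ι) id := by
      rw [Matrix.submatrix_mul _ _ _ id _ Function.bijective_id, hE, Matrix.one_mul,
        Matrix.submatrix_id_id]
    _ = 0 := by rw [← mul_pow_mul_comm, ← hEF, hNE, submatrix_zero, Pi.zero_apply, Pi.zero_apply]

end FullRankFactorization

section Labelling

variable {R α ι : Type*} [CommRing R] [LinearOrder α]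

/-- The block strictly upper triangular matrix whose blocks are the level sets of the labelling `c`,
with the entries of `A` above the diagonal blocks. -/
def strictUpper (c : ι → α) (A : Matrix ι ι R) : Matrix ι ι R :=
  of fun i j => if c i < c j then A i j else 0

theorem strictUpper_map {R' : Type*} [CommRing R'] (f : R →+* R') (c : ι → α)
    (A : Matrix ι ι R) : (strictUpper c A).map f = strictUpper c (A.map f) := by
  ext i j
  simp only [strictUpper, map_apply, of_apply]
  split_ifs <;> simp

theorem strictUpper_smul (c : ι → α) (t : R) (A : Matrix ι ι R) :
    strictUpper c (t • A) = t • strictUpper c A := by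
  ext i j
  simp [strictUpper]

theorem strictUpper_sumElim {ν : Type*} {c : ι → α} {a : α} (hc : ∀ i, c i < a)
    (A : Matrix ι ι R) (B : Matrix ι ν R) (C : Matrix ν ι R) (D : Matrix ν ν R) :
    strictUpper (Sum.elim c fun _ => a) (fromBlocks A B C D) =
      fromBlocks (strictUpper c A) B 0 0 := by
  ext (i | i) (j | j)
  · rfl
  · simp [strictUpper, hc]
  · simp [strictUpper, (hc _).not_gt]
  · simp [strictUpper]

variable [DecidableEq ι]

/-- The block lower unipotent matrix whose blocks are the level sets of the labelling `c`, with the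
entries of `A` below the diagonal blocks. -/
def lowerUnipotent (c : ι → α) (A : Matrix ι ι R) : Matrix ι ι R :=
  of fun i j => if c j < c i then A i j else (1 : Matrix ι ι R) i j

theorem lowerUnipotent_map {R' : Type*} [CommRing R'] (f : R →+* R') (c : ι → α)
    (A : Matrix ι ι R) : (lowerUnipotent c A).map f = lowerUnipotent c (A.map f) := by
  ext i j
  simp only [lowerUnipotent, map_apply, of_apply, one_apply]
  split_ifs <;> simp

theorem lowerUnipotent_submatrix {κ : Type*} [DecidableEq κ] (c : ι → α) (A : Matrix ι ι R)
    (e : κ ≃ ι) :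
    (lowerUnipotent c A).submatrix e e = lowerUnipotent (c ∘ e) (A.submatrix e e) := by
  ext i j
  simp [lowerUnipotent, one_apply]

theorem lowerUnipotent_sumElim {ν : Type*} [DecidableEq ν] {c : ι → α} {a : α} (hc : ∀ i, c i < a)
    (A : Matrix ι ι R) (B : Matrix ι ν R) (C : Matrix ν ι R) (D : Matrix ν ν R) :
    lowerUnipotent (Sum.elim c fun _ => a) (fromBlocks A B C D) =
      fromBlocks (lowerUnipotent c A) 0 C 1 := by
  ext (i | i) (j | j) <;> simp [lowerUnipotent, hc, (hc _).not_gt, one_apply]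

variable [Fintype ι]

theorem det_lowerUnipotent (c : ι → α) (A : Matrix ι ι R) :
    (lowerUnipotent c A).det = 1 := by
  have htri : (lowerUnipotent c A).BlockTriangular (OrderDual.toDual ∘ c) := by
    intro i j (hij : c i < c j)
    simp [lowerUnipotent, hij.not_gt, one_apply_ne (ne_of_apply_ne c hij.ne)]
  rw [htri.det]
  refine Finset.prod_eq_one fun a _ => ?_
  suffices (lowerUnipotent c A).toSquareBlock (OrderDual.toDual ∘ c) a = 1 by rw [this, det_one]
  ext ⟨i, hi⟩ ⟨j, hj⟩
  have hc : c i = c j := OrderDual.toDual.injective (hi.trans hj.symm)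
  simp [toSquareBlock_def, lowerUnipotent, hc, one_apply]

theorem strictUpper_pow_eq_zero {c : ι → ℕ} {m : ℕ} (hc : ∀ i, c i < m)
    (A : Matrix ι ι R) : strictUpper c A ^ m = 0 := by
  have hpow (k : ℕ) {i j : ι} (hij : c j < c i + k) : (strictUpper c A ^ k) i j = 0 := by
    induction k generalizing j with
    | zero => rw [pow_zero, one_apply_ne (ne_of_apply_ne c (by lia))]
    | succ k ih =>
      rw [pow_succ, mul_apply]
      refine Finset.sum_eq_zero fun l _ => ?_
      by_cases hl : c l < c i + k
      · rw [ih hl, zero_mul]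
      · rw [strictUpper, of_apply, if_neg (by lia), mul_zero]
  ext i j
  exact hpow m ((hc j).trans_le (Nat.le_add_left _ _))

end Labelling

section NormalForm

variable {ι κ : Type*} {m r s : ℕ}

/-- A labelling by `0, …, m - 1` whose first `m - s` fibres have `r` elements and whose last `s`
fibres have `r + 1` elements. These are the block sizes of a generic nilpotent matrix `N` with
`N ^ m = 0` and `m * r + s` rows: the last `j` blocks together have as many elements as the kernel
of `N ^ j` has dimensions. -/
structure IsBalanced (m r s : ℕ) (c : ι → ℕ) : Prop where
  lt : ∀ i, c i < m
  card_fiber : ∀ j < m, Nat.card {i // c i = j} = r + if m ≤ s + j then 1 else 0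

theorem IsBalanced.comp_equiv {c : ι → ℕ} (hc : IsBalanced m r s c) (e : κ ≃ ι) :
    IsBalanced m r s (c ∘ e) where
  lt i := hc.lt (e i)
  card_fiber j hj := by
    rw [← hc.card_fiber j hj]
    exact Nat.card_congr (e.subtypeEquiv fun i => Iff.rfl)

theorem IsBalanced.exists_equiv [Finite ι] [Finite κ] {c : ι → ℕ} {c' : κ → ℕ}
    (hc : IsBalanced m r s c) (hc' : IsBalanced m r s c') : ∃ e : ι ≃ κ, c' ∘ e = c := by
  have hfiber (j : ℕ) : Nonempty ({i // c i = j} ≃ {i // c' i = j}) := by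
    by_cases hj : j < m
    · exact Finite.card_eq.1 ((hc.card_fiber j hj).trans (hc'.card_fiber j hj).symm)
    · have : IsEmpty {i // c i = j} := ⟨fun i => hj (i.2 ▸ hc.lt i)⟩
      have : IsEmpty {i // c' i = j} := ⟨fun i => hj (i.2 ▸ hc'.lt i)⟩
      exact ⟨Equiv.equivOfIsEmpty _ _⟩
  exact ⟨Equiv.ofFiberEquiv fun j => (hfiber j).some, funext (Equiv.ofFiberEquiv_map _)⟩

theorem IsBalanced.sumElim [Finite ι] [Finite κ] {c : ι → ℕ} (hc : IsBalanced m r (s - 1) c)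
    (hs : s ≤ m + 1) (hκ : Nat.card κ = r + if 0 < s then 1 else 0) :
    IsBalanced (m + 1) r s (Sum.elim c fun _ : κ => m) where
  lt := by
    rintro (i | _)
    · exact (hc.lt i).trans m.lt_succ_self
    · exact m.lt_succ_self
  card_fiber j hj := by
    rw [Nat.card_congr Equiv.subtypeSum, Nat.card_sum]
    simp only [Sum.elim_inl, Sum.elim_inr]
    rcases Nat.lt_succ_iff_lt_or_eq.1 hj with hj | rfl
    · rw [hc.card_fiber j hj, Nat.card_eq_zero.2 (.inl ⟨fun b => hj.ne' b.2⟩)]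
      split_ifs <;> lia
    · rw [Nat.card_eq_zero.2 (.inl ⟨fun a => (hc.lt a.1).ne a.2⟩),
        Nat.card_congr (Equiv.subtypeUnivEquiv fun _ => rfl), hκ]
      split_ifs <;> lia

variable [Fintype ι] [DecidableEq ι]

/-- Conjugation of `X` by `g` up to the factor `det g`, so that the entries stay polynomial. -/
def adjConj {R : Type*} [CommRing R] (g X : Matrix ι ι R) : Matrix ι ι R :=
  g * X * g.adjugate

theorem adjConj_map {R R' : Type*} [CommRing R] [CommRing R'] (f : R →+* R')
    (g X : Matrix ι ι R) : (adjConj g X).map f = adjConj (g.map f) (X.map f) := by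
  simp only [adjConj, ← RingHom.mapMatrix_apply, map_mul, RingHom.map_adjugate]

theorem adjConj_pow_eq_zero {R : Type*} [CommRing R] {X : Matrix ι ι R} (hX : X ^ m = 0)
    (g : Matrix ι ι R) : adjConj g X ^ m = 0 := by
  cases m with
  | zero => rw [pow_zero, ← hX, pow_zero]
  | succ k =>
    calc
      adjConj g X ^ (k + 1) = g * (g.det • X) ^ k * (X * g.adjugate) := by
        rw [adjConj, Matrix.mul_assoc, pow_succ, ← Matrix.mul_assoc, mul_pow_mul_comm,
          Matrix.mul_assoc X, adjugate_mul, Matrix.mul_smul, Matrix.mul_one]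
      _ = g.det ^ k • (g * X ^ (k + 1) * g.adjugate) := by
        simp only [smul_pow, Matrix.mul_smul, Matrix.smul_mul, Matrix.mul_assoc, pow_succ]
      _ = 0 := by rw [hX, Matrix.mul_zero, Matrix.zero_mul, smul_zero]

theorem adjConj_smul {R : Type*} [CommRing R] (t : R) (g X : Matrix ι ι R) :
    adjConj g (t • X) = t • adjConj g X := by
  rw [adjConj, Matrix.mul_smul, Matrix.smul_mul, adjConj]

theorem adjConj_eq_det_smul {R : Type*} [CommRing R] {N g X : Matrix ι ι R}
    (h : N * g = g * X) : adjConj g X = g.det • N := by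
  rw [adjConj, ← h, Matrix.mul_assoc, mul_adjugate, Matrix.mul_smul, Matrix.mul_one]

theorem fromRows_mul_fromCols_mul_fromBlocks {R : Type*} [CommRing R] [Fintype κ] [DecidableEq κ]
    {L U : Matrix ι ι R} (hL : L.det = 1) (B : Matrix κ ι R) (F : Matrix ι ι R)
    (G : Matrix ι κ R) (h : (F + G * B) * L = L * U) :
    fromRows 1 B * fromCols F G * fromBlocks L 0 (B * L) 1 =
      fromBlocks L 0 (B * L) 1 * fromBlocks U (L.adjugate * G) 0 0 := by
  have hadj : L * (L.adjugate * G) = G := by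
    rw [← Matrix.mul_assoc, mul_adjugate, hL, one_smul, Matrix.one_mul]
  have h' : F * L + G * (B * L) = L * U := by rw [← h, Matrix.add_mul, Matrix.mul_assoc]
  rw [Matrix.mul_assoc, fromCols_mul_fromBlocks, fromRows_mul_fromCols, fromBlocks_multiply, h']
  simp [Matrix.mul_assoc, hadj]

variable {K}

theorem exists_mul_lowerUnipotent_eq_of_submatrix {N : Matrix ι ι K} [Fintype κ] [DecidableEq κ]
    (e : κ ≃ ι)
    (h : ∃ (c : κ → ℕ) (A : Matrix κ κ K), IsBalanced m r s c ∧
      N.submatrix e e * lowerUnipotent c A = lowerUnipotent c A * strictUpper c A) :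
    ∃ (c : ι → ℕ) (A : Matrix ι ι K), IsBalanced m r s c ∧
      N * lowerUnipotent c A = lowerUnipotent c A * strictUpper c A := by
  obtain ⟨c, A, hc, hA⟩ := h
  refine ⟨c ∘ e.symm, A.submatrix e.symm e.symm, hc.comp_equiv e.symm, ?_⟩
  have hU : strictUpper (c ∘ e.symm) (A.submatrix e.symm e.symm) =
    (strictUpper c A).submatrix e.symm e.symm := rfl
  rw [← lowerUnipotent_submatrix, hU, submatrix_mul_equiv, ← hA,
    ← submatrix_mul_equiv _ _ _ e.symm]
  simp

theorem exists_mul_lowerUnipotent_eq (N : Matrix ι ι K) (hN : N ^ m = 0)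
    (hcard : Fintype.card ι = m * r + s) (hs : s ≤ m) :
    ∃ (c : ι → ℕ) (A : Matrix ι ι K), IsBalanced m r s c ∧
      N * lowerUnipotent c A = lowerUnipotent c A * strictUpper c A := by
  classical
  induction m generalizing ι s with
  | zero =>
    have : IsEmpty ι := Fintype.card_eq_zero_iff.1 (by lia)
    exact ⟨0, 0, ⟨isEmptyElim, by simp⟩, Subsingleton.elim _ _⟩
  | succ m ih =>
    obtain ⟨S, _hS, E, F, hScard, hE, rfl, hFE⟩ := exists_eq_mul_of_pow_succ_eq_zero hN hcard hs
    let e := Equiv.sumCompl (· ∈ S)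
    let B := (E.submatrix e id).toRows₂
    have hEB : E.submatrix e id = fromRows 1 B := by
      rw [← hE]
      exact (fromRows_toRows _).symm
    have hF := (fromCols_toCols (F.submatrix id e)).symm
    set F₁ := (F.submatrix id e).toCols₁
    set F₂ := (F.submatrix id e).toCols₂
    have hFE' : F * E = F₁ + F₂ * B := by
      rw [← Matrix.submatrix_id_id (F * E), ← submatrix_mul_equiv F E id e id, hEB, hF,
        fromCols_mul_fromRows, Matrix.mul_one]
    obtain ⟨c, A, hc, hA⟩ := ih (F * E) hFE hScard (by lia)
    have hκ : Nat.card {i // i ∉ S} = r + if 0 < s then 1 else 0 := by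
      have hsum := Fintype.card_congr e
      rw [Fintype.card_sum, hcard, ← Nat.card_eq_fintype_card (α := {i // i ∉ S}),
        hScard, add_mul] at hsum
      split_ifs <;> lia
    refine exists_mul_lowerUnipotent_eq_of_submatrix e ⟨Sum.elim c fun _ => m,
      fromBlocks A ((lowerUnipotent c A).adjugate * F₂) (B * lowerUnipotent c A) 0,
      hc.sumElim hs hκ, ?_⟩
    rw [lowerUnipotent_sumElim hc.lt, strictUpper_sumElim hc.lt,
      Matrix.submatrix_mul E F e id e Function.bijective_id, hEB, hF]
    exact fromRows_mul_fromCols_mul_fromBlocks (det_lowerUnipotent c A) B F₁ F₂ (hFE' ▸ hA)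

theorem exists_eq_adjConj_lowerUnipotent {N : Matrix ι ι K} (hN : N ^ m = 0)
    (hcard : Fintype.card ι = m * r + s) (hs : s ≤ m) :
    ∃ (c : ι → ℕ) (A : Matrix ι ι K), IsBalanced m r s c ∧
      N = adjConj (lowerUnipotent c A) (strictUpper c A) := by
  obtain ⟨c, A, hc, h⟩ := exists_mul_lowerUnipotent_eq N hN hcard hs
  refine ⟨c, A, hc, ?_⟩
  rw [adjConj_eq_det_smul h, det_lowerUnipotent, one_smul]

theorem exists_eq_adjConj_strictUpper {N : Matrix ι ι K} (hN : N ^ m = 0)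
    (hcard : Fintype.card ι = m * r + s) (hs : s ≤ m) {c₀ : ι → ℕ} (hc₀ : IsBalanced m r s c₀) :
    ∃ g A : Matrix ι ι K, N = adjConj g (strictUpper c₀ A) := by
  obtain ⟨c, A, hc, hA⟩ := exists_mul_lowerUnipotent_eq N hN hcard hs
  obtain ⟨e, rfl⟩ := hc.exists_equiv hc₀
  set L := lowerUnipotent (c₀ ∘ e) A
  let g := L.submatrix id e.symm
  have hg : g.det ≠ 0 := by
    rw [det_permute', det_lowerUnipotent, mul_one]
    exact ((Equiv.Perm.sign e.symm).isUnit.map (Int.castRingHom K)).ne_zero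
  refine ⟨g, g.det⁻¹ • A.submatrix e.symm e.symm, ?_⟩
  have hgX : N * g = g * strictUpper c₀ (A.submatrix e.symm e.symm) := by
    have hX : strictUpper c₀ (A.submatrix e.symm e.symm) =
        (strictUpper (c₀ ∘ e) A).submatrix e.symm e.symm := by
      ext i j
      simp [strictUpper]
    rw [hX, submatrix_mul_equiv, ← hA, Matrix.submatrix_mul N L id id _ Function.bijective_id,
      Matrix.submatrix_id_id]
  rw [strictUpper_smul, adjConj_smul, adjConj_eq_det_smul hgX, inv_smul_smul₀ hg]

end NormalForm

section NilpotentVariety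

variable {K} {ι κ τ : Type*} {m r s : ℕ}

/-- The comorphism of the map `(y, z) ↦ (M y, z)`, for a matrix `M` of polynomials in `y`. -/
def cylinderHom (κ : Type*) (M : Matrix ι ι (MvPolynomial τ K)) :
    MvPolynomial ((ι × ι) ⊕ κ) K →ₐ[K] MvPolynomial (τ ⊕ κ) K :=
  aeval (Sum.elim (fun p => rename Sum.inl (M p.1 p.2)) fun q => X (Sum.inr q))

theorem mem_range_comap_cylinderHom {M : Matrix ι ι (MvPolynomial τ K)} {x : (ι × ι) ⊕ κ → K} :
    x ∈ Set.range (comap (cylinderHom κ M)) ↔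
      ∃ y : τ → K, of (fun i j => x (Sum.inl (i, j))) = M.map (eval y) := by
  have comap_inl (y : τ ⊕ κ → K) (i j : ι) :
      comap (cylinderHom κ M) y (Sum.inl (i, j)) = eval (y ∘ Sum.inl) (M i j) := by
    simp [cylinderHom, aeval_eq_eval, eval_rename]
  have comap_inr (y : τ ⊕ κ → K) (q : κ) :
      comap (cylinderHom κ M) y (Sum.inr q) = y (Sum.inr q) := by
    simp [cylinderHom]
  constructor
  · rintro ⟨y, rfl⟩
    exact ⟨y ∘ Sum.inl, Matrix.ext fun i j => comap_inl y i j⟩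
  · rintro ⟨y, hy⟩
    refine ⟨Sum.elim y (x ∘ Sum.inr), funext ?_⟩
    rintro (⟨i, j⟩ | q)
    · rw [comap_inl, Sum.elim_comp_inl]
      exact (congrFun₂ hy i j).symm
    · exact comap_inr _ q

/-- The matrix with zero entries inside the blocks of the labelling `c`, and prescribed entries
outside of them. -/
def offDiag {R : Type*} [Zero R] (c : ι → ℕ) (y : {p : ι × ι // c p.1 ≠ c p.2} → R) :
    Matrix ι ι R :=
  of fun i j => if h : c i ≠ c j then y ⟨(i, j), h⟩ else 0

theorem offDiag_map {R R' : Type*} [Semiring R] [Semiring R'] (f : R →+* R') (c : ι → ℕ)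
    (y : {p : ι × ι // c p.1 ≠ c p.2} → R) : (offDiag c y).map f = offDiag c (f ∘ y) := by
  ext i j
  simp only [offDiag, map_apply, of_apply]
  split_ifs <;> simp

theorem exists_isBalanced [Fintype ι] (hcard : Fintype.card ι = m * r + s) (hs : s ≤ m) :
    ∃ c : ι → ℕ, IsBalanced m r s c := by
  classical
  have hzero : (0 : Matrix ι ι ℚ) ^ m = 0 := by
    cases m with
    | zero =>
      have : IsEmpty ι := Fintype.card_eq_zero_iff.1 (by lia)
      exact Subsingleton.elim _ _
    | succ m => exact zero_pow m.succ_ne_zero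
  obtain ⟨c, _, hc, _⟩ := exists_eq_adjConj_lowerUnipotent hzero hcard hs
  exact ⟨c, hc⟩

theorem finite_setOf_isBalanced [Finite ι] (m r s : ℕ) : {c : ι → ℕ | IsBalanced m r s c}.Finite :=
  (Set.Finite.pi' fun _ => Set.finite_lt_nat m).subset fun _ hc => hc.lt

variable [Fintype ι] [DecidableEq ι]

/-- The matrix obtained by conjugating the upper part of `A` by its lower unipotent part. For a
fixed labelling `c` this parametrizes nilpotent matrices by the entries of `A` outside of the
diagonal blocks. -/
def nilpotentChart {R : Type*} [CommRing R] (c : ι → ℕ) (A : Matrix ι ι R) : Matrix ι ι R :=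
  adjConj (lowerUnipotent c A) (strictUpper c A)

theorem nilpotentChart_map {R R' : Type*} [CommRing R] [CommRing R'] (f : R →+* R') (c : ι → ℕ)
    (A : Matrix ι ι R) : (nilpotentChart c A).map f = nilpotentChart c (A.map f) := by
  rw [nilpotentChart, adjConj_map, lowerUnipotent_map, strictUpper_map, nilpotentChart]

theorem nilpotentChart_offDiag {R : Type*} [CommRing R] (c : ι → ℕ) (A : Matrix ι ι R) :
    nilpotentChart c (offDiag c fun p => A p.1.1 p.1.2) = nilpotentChart c A := by
  have hU : strictUpper c (offDiag c fun p => A p.1.1 p.1.2) = strictUpper c A := by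
    ext i j
    simp +contextual [strictUpper, offDiag, ne_of_lt]
  have hL : lowerUnipotent c (offDiag c fun p => A p.1.1 p.1.2) = lowerUnipotent c A := by
    ext i j
    simp +contextual [lowerUnipotent, offDiag, ne_of_gt]
  rw [nilpotentChart, hU, hL, nilpotentChart]

/-- The comorphism of the parametrization of points of `nilpotentVariety K ι κ m` by
`nilpotentChart c`. -/
def nilpotentChartHom (K κ : Type*) [Field K] (c : ι → ℕ) : MvPolynomial ((ι × ι) ⊕ κ) K →ₐ[K]
    MvPolynomial ({p : ι × ι // c p.1 ≠ c p.2} ⊕ κ) K :=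
  cylinderHom κ (nilpotentChart c (offDiag c X))

theorem mem_range_comap_nilpotentChartHom {c : ι → ℕ} {x : (ι × ι) ⊕ κ → K} :
    x ∈ Set.range (comap (nilpotentChartHom K κ c)) ↔
      ∃ A : Matrix ι ι K, of (fun i j => x (Sum.inl (i, j))) = nilpotentChart c A := by
  have hX (y : {p : ι × ι // c p.1 ≠ c p.2} → K) : eval y ∘ X = y := funext fun p => eval_X p
  simp only [nilpotentChartHom, mem_range_comap_cylinderHom, nilpotentChart_map, offDiag_map, hX]
  constructor
  · rintro ⟨y, hy⟩
    exact ⟨_, hy⟩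
  · rintro ⟨A, hA⟩
    exact ⟨fun p => A p.1.1 p.1.2, hA.trans (nilpotentChart_offDiag c A).symm⟩

/-- The matrices `N` with `N ^ m = 0`, times the affine space with coordinates indexed by `κ`; the
entry `N i j` is the coordinate `Sum.inl (i, j)`. -/
def nilpotentVariety (K ι κ : Type*) [Field K] [Fintype ι] [DecidableEq ι] (m : ℕ) :
    Set ((ι × ι) ⊕ κ → K) :=
  {x | (of fun i j => x (Sum.inl (i, j))) ^ m = 0}

theorem mem_nilpotentVariety {x : (ι × ι) ⊕ κ → K} :
    x ∈ nilpotentVariety K ι κ m ↔ (of fun i j => x (Sum.inl (i, j))) ^ m = 0 :=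
  Iff.rfl

theorem range_comap_nilpotentChartHom_subset {c : ι → ℕ} (hc : ∀ i, c i < m) :
    Set.range (comap (nilpotentChartHom K κ c)) ⊆ nilpotentVariety K ι κ m := by
  intro x hx
  obtain ⟨A, hA⟩ := mem_range_comap_nilpotentChartHom.1 hx
  rw [mem_nilpotentVariety, hA]
  exact adjConj_pow_eq_zero (strictUpper_pow_eq_zero hc A) _

theorem nilpotentVariety_subset_iUnion (hcard : Fintype.card ι = m * r + s) (hs : s ≤ m) :
    nilpotentVariety K ι κ m ⊆
      ⋃ c ∈ {c : ι → ℕ | IsBalanced m r s c}, Set.range (comap (nilpotentChartHom K κ c)) := by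
  intro x hx
  obtain ⟨c, A, hc, hA⟩ := exists_eq_adjConj_lowerUnipotent hx hcard hs
  exact Set.mem_biUnion hc (mem_range_comap_nilpotentChartHom.2 ⟨A, hA⟩)

theorem nilpotentVariety_eq_range_comap (κ : Type*) (hcard : Fintype.card ι = m * r + s)
    (hs : s ≤ m) :
    ∃ M : Matrix ι ι (MvPolynomial ((ι × ι) ⊕ (ι × ι)) K),
      nilpotentVariety K ι κ m = Set.range (comap (cylinderHom κ M)) := by
  obtain ⟨c, hc⟩ := exists_isBalanced hcard hs
  let G : Matrix ι ι (MvPolynomial ((ι × ι) ⊕ (ι × ι)) K) := of fun i j => X (Sum.inl (i, j))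
  let A : Matrix ι ι (MvPolynomial ((ι × ι) ⊕ (ι × ι)) K) := of fun i j => X (Sum.inr (i, j))
  refine ⟨adjConj G (strictUpper c A), Set.ext fun x => ?_⟩
  simp only [mem_range_comap_cylinderHom, adjConj_map, strictUpper_map]
  constructor
  · intro hx
    obtain ⟨g, B, h⟩ := exists_eq_adjConj_strictUpper hx hcard hs hc
    refine ⟨Sum.elim (fun p => g p.1 p.2) fun p => B p.1 p.2, h.trans ?_⟩
    congr <;> ext i j <;> simp [G, A]
  · rintro ⟨y, hy⟩
    rw [mem_nilpotentVariety, hy]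
    exact adjConj_pow_eq_zero (strictUpper_pow_eq_zero hc.lt _) _

attribute [local instance] zariskiAff

variable [Fintype κ]

theorem isClosed_nilpotentVariety : IsClosed (nilpotentVariety K ι κ m) := by
  let M : Matrix ι ι (MvPolynomial ((ι × ι) ⊕ κ) K) := of fun i j => X (.inl (i, j))
  have hM (x : (ι × ι) ⊕ κ → K) : M.map (eval x) = of fun i j => x (Sum.inl (i, j)) := by
    ext i j
    simp [M]
  have hV : nilpotentVariety K ι κ m = ⋂ (i) (j), {x | eval x ((M ^ m) i j) = 0} := by
    ext x
    simp only [mem_nilpotentVariety, ← hM, ← RingHom.mapMatrix_apply, ← map_pow, ← Matrix.ext_iff,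
      Set.mem_iInter]
    rfl
  rw [hV]
  exact isClosed_iInter fun i => isClosed_iInter fun j => isClosed_setOf_eval_eq_zero _

theorem isIrreducible_nilpotentVariety [Infinite K] (hcard : Fintype.card ι = m * r + s)
    (hs : s ≤ m) : IsIrreducible (nilpotentVariety K ι κ m) := by
  obtain ⟨M, hM⟩ := nilpotentVariety_eq_range_comap (K := K) κ hcard hs
  rw [hM]
  exact isIrreducible_range_comap _

theorem exists_nilpotentVariety_eq_closure [Infinite K] (hcard : Fintype.card ι = m * r + s)
    (hs : s ≤ m) : ∃ c : ι → ℕ, IsBalanced m r s c ∧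
      nilpotentVariety K ι κ m = closure (Set.range (comap (nilpotentChartHom K κ c))) := by
  have hfin : {c : ι → ℕ | IsBalanced m r s c}.Finite := finite_setOf_isBalanced m r s
  have hcover : nilpotentVariety K ι κ m ⊆ ⋃₀ ↑(hfin.image fun c => closure
      (Set.range (comap (nilpotentChartHom K κ c)))).toFinset := by
    rw [Set.Finite.coe_toFinset, Set.sUnion_image]
    exact (nilpotentVariety_subset_iUnion hcard hs).trans
      (Set.iUnion₂_mono fun c _ => subset_closure)
  obtain ⟨_, hZ, hV⟩ := isIrreducible_iff_sUnion_isClosed.1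
    (isIrreducible_nilpotentVariety hcard hs) _ (by simp +contextual) hcover
  obtain ⟨c, hc, rfl⟩ := (hfin.image _).mem_toFinset.1 hZ
  exact ⟨c, hc, hV.antisymm (closure_minimal (range_comap_nilpotentChartHom_subset hc.lt)
    isClosed_nilpotentVariety)⟩

end NilpotentVariety

section TangentSpace

variable {K} {ι κ : Type*} {m r s : ℕ} {c : ι → ℕ} {up : ι → ι}

theorem map_snd_mul {R : Type*} [CommRing R] [Fintype ι] (A B : Matrix ι ι (DualNumber R)) :
    (A * B).map TrivSqZeroExt.snd = A.map TrivSqZeroExt.fst * B.map TrivSqZeroExt.snd +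
      A.map TrivSqZeroExt.snd * B.map TrivSqZeroExt.fst := by
  ext i j
  simp [Matrix.mul_apply, TrivSqZeroExt.snd_sum, Finset.sum_add_distrib]

theorem IsBalanced.exists_succ [Finite ι] (hc : IsBalanced m r s c) :
    ∃ up : ι → ι, (∀ i, c i + 1 < m → c (up i) = c i + 1) ∧ Set.InjOn up {i | c i + 1 < m} := by
  cases isEmpty_or_nonempty ι
  · exact ⟨id, isEmptyElim, Function.injective_id.injOn⟩
  have exists_injOn (a : ℕ) (ha : a + 1 < m) :
      ∃ f : ι → ι, {i | c i = a} ⊆ f ⁻¹' {i | c i = a + 1} ∧ Set.InjOn f {i | c i = a} := by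
    refine Set.Finite.exists_injOn_of_encard_le (Set.toFinite _) ?_
    rw [← (Set.toFinite _).cast_ncard_eq, ← (Set.toFinite _).cast_ncard_eq, Nat.cast_le]
    have hcard := hc.card_fiber a (by lia)
    have hcard' := hc.card_fiber (a + 1) ha
    change Set.ncard {i | c i = a} = _ at hcard
    change Set.ncard {i | c i = a + 1} = _ at hcard'
    rw [hcard, hcard']
    split_ifs <;> lia
  choose! f hf hinj using exists_injOn
  refine ⟨fun i => f (c i) i, fun i hi => hf (c i) hi rfl, fun i hi j hj hij => ?_⟩
  have hci : c (f (c i) i) = c i + 1 := hf (c i) hi rfl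
  have hcj : c (f (c j) j) = c j + 1 := hf (c j) hj rfl
  have hcij : c j = c i := by
    have := congrArg c hij
    lia
  exact hinj (c i) hi rfl hcij (by simpa only [hcij] using hij)

variable [DecidableEq ι]

/-- The matrix sending the basis vector `up i` to the basis vector `i` if `i` is not in the last
block of the labelling `c`, and all other basis vectors to zero. For a suitable map `up` from each
block to the next this is a generic nilpotent matrix in normal form. -/
def shiftMatrix (R : Type*) [Zero R] [One R] (m : ℕ) (c : ι → ℕ) (up : ι → ι) : Matrix ι ι R :=
  of fun i j => if c i + 1 < m ∧ j = up i then 1 else 0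

theorem shiftMatrix_apply_eq_zero {R : Type*} [Zero R] [One R]
    (hup : ∀ i, c i + 1 < m → c (up i) = c i + 1) {i j : ι} (hij : ¬ c i < c j) :
    shiftMatrix R m c up i j = 0 := by
  refine if_neg ?_
  rintro ⟨hi, rfl⟩
  exact hij (by rw [hup i hi]; exact Nat.lt_succ_self _)

theorem strictUpper_shiftMatrix {R : Type*} [CommRing R]
    (hup : ∀ i, c i + 1 < m → c (up i) = c i + 1) :
    strictUpper c (shiftMatrix R m c up) = shiftMatrix R m c up := by
  ext i j
  rw [strictUpper, of_apply, ite_eq_left_iff]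
  exact fun hij => (shiftMatrix_apply_eq_zero hup hij).symm

theorem lowerUnipotent_shiftMatrix {R : Type*} [CommRing R]
    (hup : ∀ i, c i + 1 < m → c (up i) = c i + 1) :
    lowerUnipotent c (shiftMatrix R m c up) = 1 := by
  ext i j
  rw [lowerUnipotent, of_apply, ite_eq_right_iff]
  intro hij
  rw [shiftMatrix_apply_eq_zero hup hij.not_gt, one_apply_ne (ne_of_apply_ne c hij.ne')]

theorem offDiag_shiftMatrix {R : Type*} [Zero R] [One R]
    (hup : ∀ i, c i + 1 < m → c (up i) = c i + 1) :
    offDiag c (fun p => shiftMatrix R m c up p.1.1 p.1.2) = shiftMatrix R m c up := by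
  ext i j
  by_cases hij : c i = c j
  · simp [offDiag, hij, shiftMatrix_apply_eq_zero hup hij.not_lt]
  · simp [offDiag, hij]

variable [Fintype ι]

theorem nilpotentChart_shiftMatrix {R : Type*} [CommRing R]
    (hup : ∀ i, c i + 1 < m → c (up i) = c i + 1) :
    nilpotentChart c (shiftMatrix R m c up) = shiftMatrix R m c up := by
  rw [nilpotentChart, strictUpper_shiftMatrix hup, lowerUnipotent_shiftMatrix hup, adjConj,
    adjugate_one, Matrix.one_mul, Matrix.mul_one]

theorem shiftMatrix_mul_apply {R : Type*} [CommRing R] (Z : Matrix ι ι R) (i j : ι) :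
    (shiftMatrix R m c up * Z) i j = if c i + 1 < m then Z (up i) j else 0 := by
  by_cases hi : c i + 1 < m <;> simp [Matrix.mul_apply, shiftMatrix, hi]

theorem mul_shiftMatrix_apply {R : Type*} [CommRing R]
    (hinj : Set.InjOn up {i | c i + 1 < m}) (Z : Matrix ι ι R) (i : ι) {j : ι}
    (hj : c j + 1 < m) : (Z * shiftMatrix R m c up) i (up j) = Z i j := by
  rw [Matrix.mul_apply, Fintype.sum_eq_single j]
  · simp [shiftMatrix, hj]
  · intro l hl
    have : ¬(c l + 1 < m ∧ up j = up l) := fun h => hl (hinj h.1 hj h.2.symm)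
    simp [shiftMatrix, this]

theorem apply_eq_zero_of_shiftMatrix_mul_eq {R : Type*} [CommRing R]
    (hc : ∀ i, c i < m) (hup : ∀ i, c i + 1 < m → c (up i) = c i + 1)
    (hinj : Set.InjOn up {i | c i + 1 < m}) {B : Matrix ι ι R}
    (h : shiftMatrix R m c up * strictUpper (OrderDual.toDual ∘ c) B =
      strictUpper (OrderDual.toDual ∘ c) B * shiftMatrix R m c up + strictUpper c B)
    {i j : ι} (hij : c i ≠ c j) : B i j = 0 := by
  have lower_apply {i j : ι} (hij : c j < c i) : strictUpper (OrderDual.toDual ∘ c) B i j = B i j :=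
    if_pos hij
  have hlower (k : ℕ) {i j : ι} (hi : m ≤ c i + k) (hij : c j < c i) : B i j = 0 := by
    induction k generalizing i j with
    | zero => exact absurd (hc i) hi.not_gt
    | succ k ih =>
      have hj : c j + 1 < m := by
        have := hc i
        lia
      have hupper : strictUpper c B i (up j) = 0 := if_neg (by rw [hup j hj]; lia)
      have hentry := congrFun₂ h i (up j)
      rw [shiftMatrix_mul_apply, Matrix.add_apply, mul_shiftMatrix_apply hinj _ _ hj, hupper,
        add_zero, lower_apply hij] at hentry
      rw [← hentry, ite_eq_right_iff]
      intro hi'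
      have hlt : c (up j) < c (up i) := by
        rw [hup i hi', hup j hj]
        lia
      rw [lower_apply hlt]
      exact ih (by rw [hup i hi']; lia) hlt
  have hlower_zero : strictUpper (OrderDual.toDual ∘ c) B = 0 := by
    ext i j
    exact ite_eq_right_iff.2 fun hij => hlower m (Nat.le_add_left _ _) hij
  rcases hij.lt_or_gt with hij | hij
  · rw [hlower_zero, Matrix.mul_zero, Matrix.zero_mul, zero_add] at h
    have hentry : 0 = if c i < c j then B i j else 0 := congrFun₂ h i j
    rwa [if_pos hij, eq_comm] at hentry
  · exact hlower m (Nat.le_add_left _ _) hij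

theorem nilpotentChart_mul_lowerUnipotent {R : Type*} [CommRing R] (c : ι → ℕ)
    (A : Matrix ι ι R) :
    nilpotentChart c A * lowerUnipotent c A = lowerUnipotent c A * strictUpper c A := by
  rw [nilpotentChart, adjConj, Matrix.mul_assoc, adjugate_mul, det_lowerUnipotent, one_smul,
    Matrix.mul_one]

theorem snd_eq_zero_of_map_snd_nilpotentChart {R : Type*} [CommRing R]
    (hc : ∀ i, c i < m) (hup : ∀ i, c i + 1 < m → c (up i) = c i + 1)
    (hinj : Set.InjOn up {i | c i + 1 < m}) {A : Matrix ι ι (DualNumber R)}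
    (hA : A.map TrivSqZeroExt.fst = shiftMatrix R m c up)
    (h : (nilpotentChart c A).map TrivSqZeroExt.snd = 0) {i j : ι} (hij : c i ≠ c j) :
    (A i j).snd = 0 := by
  let π : DualNumber R →+* R := (TrivSqZeroExt.fstHom R R R).toRingHom
  have hfstL : (lowerUnipotent c A).map TrivSqZeroExt.fst = 1 := by
    rw [← lowerUnipotent_shiftMatrix hup, ← hA]
    exact lowerUnipotent_map π c A
  have hfstU : (strictUpper c A).map TrivSqZeroExt.fst = shiftMatrix R m c up := by
    rw [← strictUpper_shiftMatrix hup, ← hA]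
    exact strictUpper_map π c A
  have hfstN : (nilpotentChart c A).map TrivSqZeroExt.fst = shiftMatrix R m c up := by
    rw [← nilpotentChart_shiftMatrix hup, ← hA]
    exact nilpotentChart_map π c A
  have hsndL : (lowerUnipotent c A).map TrivSqZeroExt.snd =
      strictUpper (OrderDual.toDual ∘ c) (A.map TrivSqZeroExt.snd) := by
    ext i j
    change TrivSqZeroExt.snd (if c j < c i then A i j else (1 : Matrix ι ι (DualNumber R)) i j) =
      if c j < c i then (A i j).snd else 0
    rw [one_apply]
    split_ifs <;> simp
  have hsndU : (strictUpper c A).map TrivSqZeroExt.snd =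
      strictUpper c (A.map TrivSqZeroExt.snd) := by
    ext i j
    simp only [strictUpper, map_apply, of_apply]
    split_ifs <;> simp
  have hderiv := congrArg (fun M => M.map TrivSqZeroExt.snd) (nilpotentChart_mul_lowerUnipotent c A)
  simp only [map_snd_mul, h, hfstL, hfstU, hfstN, hsndL, hsndU, Matrix.zero_mul, Matrix.one_mul,
    add_zero] at hderiv
  exact apply_eq_zero_of_shiftMatrix_mul_eq hc hup hinj (hderiv.trans (add_comm _ _)) hij

theorem eq_zero_of_snd_evalDual_nilpotentChartHom (hc : ∀ i, c i < m)
    (hup : ∀ i, c i + 1 < m → c (up i) = c i + 1) (hinj : Set.InjOn up {i | c i + 1 < m})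
    {v : {p : ι × ι // c p.1 ≠ c p.2} ⊕ κ → K}
    (hv : ∀ q, (evalDual (Sum.elim (fun p => shiftMatrix K m c up p.1.1 p.1.2) 0) v
      (nilpotentChartHom K κ c (X q))).snd = 0) : v = 0 := by
  set y : {p : ι × ι // c p.1 ≠ c p.2} ⊕ κ → K :=
    Sum.elim (fun p => shiftMatrix K m c up p.1.1 p.1.2) 0
  let g : MvPolynomial {p : ι × ι // c p.1 ≠ c p.2} K →+* DualNumber K :=
    ((evalDual y v).comp (rename Sum.inl)).toRingHom
  have hg (p : {p : ι × ι // c p.1 ≠ c p.2}) : g (X p) = evalDual y v (X (Sum.inl p)) :=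
    congrArg (evalDual y v) (rename_X _ _)
  have hfst : (offDiag c (g ∘ X)).map TrivSqZeroExt.fst = shiftMatrix K m c up := by
    rw [← offDiag_shiftMatrix hup]
    refine (offDiag_map (TrivSqZeroExt.fstHom K K K).toRingHom c _).trans (congrArg _ ?_)
    funext p
    exact (congrArg _ (hg p)).trans ((fst_evalDual _ _ _).trans (eval_X _))
  have hsnd : (nilpotentChart c (offDiag c (g ∘ X))).map TrivSqZeroExt.snd = 0 := by
    rw [← offDiag_map, ← nilpotentChart_map]
    ext i j
    have hvij := hv (Sum.inl (i, j))
    rwa [nilpotentChartHom, cylinderHom, aeval_X] at hvij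
  funext q
  rcases q with ⟨⟨i, j⟩, hij⟩ | q
  · have hA := snd_eq_zero_of_map_snd_nilpotentChart hc hup hinj hfst hsnd hij
    simpa [offDiag, hij, hg, evalDual_X] using hA
  · simpa [nilpotentChartHom, cylinderHom, evalDual_X] using hv (Sum.inr q)

end TangentSpace

section Count

open scoped Finset

variable {ι : Type*} {m r s : ℕ}

theorem sum_sq_add_ite (r : ℕ) (hs : s ≤ m) :
    ∑ j ∈ Finset.range m, (r + if m ≤ s + j then 1 else 0) ^ 2 = m * r ^ 2 + 2 * s * r + s := by
  have hfilter : {j ∈ Finset.range m | m ≤ s + j} = Finset.Ico (m - s) m := by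
    ext j
    simp only [Finset.mem_filter, Finset.mem_range, Finset.mem_Ico]
    lia
  calc
    _ = ∑ j ∈ Finset.range m, (r ^ 2 + (2 * r + 1) * if m ≤ s + j then 1 else 0) := by
      refine Finset.sum_congr rfl fun j _ => ?_
      split_ifs <;> ring
    _ = m * r ^ 2 + (2 * r + 1) * s := by
      rw [Finset.sum_add_distrib, ← Finset.mul_sum, Finset.sum_boole, hfilter, Nat.card_Ico]
      simp [Nat.sub_sub_self hs]
    _ = m * r ^ 2 + 2 * s * r + s := by ring

theorem IsBalanced.card_offDiag_add [Fintype ι] {c : ι → ℕ} (hc : IsBalanced m r s c)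
    (hs : s ≤ m) :
    Fintype.card {p : ι × ι // c p.1 ≠ c p.2} + (m * r ^ 2 + 2 * s * r + s) =
      Fintype.card ι ^ 2 := by
  classical
  have hfiber (j : ℕ) (hj : j ∈ Finset.range m) :
      #{p ∈ ({p : ι × ι | c p.1 = c p.2} : Finset _) | c p.1 = j} =
        (r + if m ≤ s + j then 1 else 0) ^ 2 := by
    rw [← hc.card_fiber j (Finset.mem_range.1 hj), Nat.card_eq_fintype_card, Fintype.card_subtype,
      sq, ← Finset.card_product]
    congr 1
    ext p
    simp only [Finset.mem_filter, Finset.mem_univ, true_and, Finset.mem_product]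
    lia
  have hdiag : #{p : ι × ι | c p.1 = c p.2} = m * r ^ 2 + 2 * s * r + s := by
    rw [Finset.card_eq_sum_card_fiberwise (f := fun p => c p.1) (t := Finset.range m)
      fun p _ => by simpa using hc.lt p.1, Finset.sum_congr rfl hfiber, sum_sq_add_ite r hs]
  rw [← hdiag, Fintype.card_subtype, add_comm, Finset.card_filter_add_card_filter_not,
    Finset.card_univ, Fintype.card_prod, sq]

end Count

attribute [local instance] zariskiAff in
theorem topologicalKrullDim_nilpotentVariety [IsAlgClosed K] {ι κ : Type*} [Fintype ι]
    [DecidableEq ι] [Fintype κ] {m r s : ℕ} (hcard : Fintype.card ι = m * r + s) (hs : s ≤ m) :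
    topologicalKrullDim (nilpotentVariety K ι κ m) =
      ((Fintype.card κ + Fintype.card ι ^ 2 - (m * r ^ 2 + 2 * s * r + s) : ℕ) : ℕ∞) := by
  have : Infinite K := IsAlgClosed.instInfinite
  obtain ⟨c, hc, hV⟩ := exists_nilpotentVariety_eq_closure (K := K) (κ := κ) hcard hs
  obtain ⟨up, hup, hinj⟩ := hc.exists_succ
  rw [hV, topologicalKrullDim_closure_range_comap fun v hv =>
    eq_zero_of_snd_evalDual_nilpotentChartHom hc.lt hup hinj hv, ← hc.card_offDiag_add hs,
    Fintype.card_sum, ← add_assoc, Nat.add_sub_cancel, add_comm]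
  rfl

theorem stmt_10_general [IsAlgClosed K] {ι κ : Type*} [Fintype ι] [DecidableEq ι] [Fintype κ]
    {m r s : ℕ} (hcard : Fintype.card ι = m * r + s) (hs : s ≤ m) :
    letI := zariskiAff K ((ι × ι) ⊕ κ)
    IsIrreducible (nilpotentVariety K ι κ m) ∧
    topologicalKrullDim (nilpotentVariety K ι κ m) =
      ((Fintype.card κ + Fintype.card ι ^ 2 - (m * r ^ 2 + 2 * s * r + s) : ℕ) : ℕ∞) :=
  ⟨isIrreducible_nilpotentVariety hcard hs, topologicalKrullDim_nilpotentVariety K hcard hs⟩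

/-- For H = KQ/(ε⁴) of type 𝔹ℂ̃₁ and a dimension vector d = (d₁,d₂)
with d₁ = 4r + s, 0 ≤ s < 4, the representation variety
Rep(H,d) = {(N,M) ∈ Mat_{d₁×d₁} × Mat_{d₁×d₂} | N⁴ = 0}
(coordinatized as affine space over the index set (Fin d₁ × Fin d₁) ⊕ (Fin d₁ × Fin d₂),
with N the first component) is irreducible and of dimension
d₁d₂ + d₁² − 4r² − 2sr − s (topological Krull dimension in the Zariski topology). -/
theorem stmt_10 [IsAlgClosed K] [CharZero K] (d1 d2 r s : ℕ)
    (hd : d1 = 4 * r + s) (hs : s < 4) :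
    letI := zariskiAff K ((Fin d1 × Fin d1) ⊕ (Fin d1 × Fin d2))
    IsIrreducible {x : ((Fin d1 × Fin d1) ⊕ (Fin d1 × Fin d2)) → K |
        (Matrix.of fun i j => x (Sum.inl (i, j))) ^ 4 = 0} ∧
    topologicalKrullDim {x : ((Fin d1 × Fin d1) ⊕ (Fin d1 × Fin d2)) → K |
        (Matrix.of fun i j => x (Sum.inl (i, j))) ^ 4 = 0}
      = ((d1 * d2 + d1 ^ 2 - (4 * r ^ 2 + 2 * s * r + s) : ℕ) : ℕ∞) := by
  have h := stmt_10_general K (κ := Fin d1 × Fin d2) ((Fintype.card_fin d1).trans hd) hs.le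
  rw [Fintype.card_prod, Fintype.card_fin, Fintype.card_fin] at h
  exact h

end
end
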